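/- arXiv:0707.2117 — 3 statements merged into one kernel-verified Lean document; each statement's English description precedes it below -/
import Mathlib

section
/- Let G be a finite simple graph of girth at least g and minimum degree at least 6(d+1), where d ≥ 1 is an integer. Then for every set X of vertices of G with |X| ≤ (1/3)·d^{⌊(g-1)/2⌋}, the open neighborhood ∂X = {y ∉ X : y is adjacent to some x ∈ X} satisfies |∂X| > 2|X|. -/
/-!
Suppose `|∂X| ≤ 2|X|`. Then `S = X ∪ ∂X` has at most `3|X|` vertices but contains every edge
meeting `X`, so the subgraph it induces has average degree more than `2d`. Deleting a vertex of
degree at most `d` keeps the average degree above `2d`, so a minimal subset of `S` with this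
property induces a subgraph of minimum degree more than `d`. By the girth condition two short paths
with the same endpoints coincide, so up to radius `(g - 1) / 2` the spheres around a vertex of this
subgraph grow by a factor of at least `d` at each step. Hence it has more than
`d ^ ((g - 1) / 2) ≥ 3|X|` vertices, a contradiction.
-/

section

open Finset SimpleGraph

variable {V : Type*} {G : SimpleGraph V}

section ShortPaths

variable {u v w x : V}

theorem eq_of_isPath_of_length_add_lt_egirth {p q : G.Walk u v} (hp : p.IsPath) (hq : q.IsPath)
    (h : (p.length + q.length : ℕ) < G.egirth) : p = q := by
  by_contra hne
  obtain ⟨_, -, -, c, hc, hlen⟩ := hp.exists_isCycle_length_le_add_of_ne hq hne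
  exact ((egirth_le_length hc).trans (Nat.cast_le.mpr hlen)).not_gt h

theorem eq_snd_or_isPath_cons {p : G.Walk w v} (hp : p.IsPath) (h : G.Adj x w)
    (hlen : (p.length + 1 : ℕ) < G.egirth) : x = p.snd ∨ (Walk.cons h p).IsPath := by
  classical
  by_cases hx : x ∈ p.support
  · left
    have hle : (p.takeUntil x hx).length + h.symm.toWalk.length ≤ p.length + 1 := by
      simpa using p.length_takeUntil_le_length hx
    have heq : p.takeUntil x hx = h.symm.toWalk :=
      eq_of_isPath_of_length_add_lt_egirth (hp.takeUntil hx) (by simp [h.ne'])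
        ((Nat.cast_le.mpr hle).trans_lt hlen)
    simpa [heq] using p.snd_takeUntil h.ne hx
  · exact .inr (hp.cons hx)

end ShortPaths

section MooreBound

variable [Fintype V]

open Classical in
/-- The sphere of radius `n` around `v`, in the form suited to path counting: the vertices joined
to `v` by a path of length exactly `n`. When `2 * n < G.egirth` these are the vertices at distance
`n` from `v`. -/
noncomputable def pathSphere (G : SimpleGraph V) (v : V) (n : ℕ) : Finset V :=
  {w | ∃ p : G.Walk w v, p.IsPath ∧ p.length = n}

theorem mem_pathSphere {v w : V} {n : ℕ} :
    w ∈ pathSphere G v n ↔ ∃ p : G.Walk w v, p.IsPath ∧ p.length = n := by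
  simp [pathSphere]

theorem pathSphere_zero (v : V) : pathSphere G v 0 = {v} := by
  ext w
  rw [mem_pathSphere, mem_singleton]
  constructor
  · rintro ⟨p, -, hp⟩
    exact Walk.eq_of_length_eq_zero hp
  · rintro rfl
    exact ⟨.nil, .nil, rfl⟩

theorem eq_zero_of_self_mem_pathSphere {v : V} {n : ℕ} (h : v ∈ pathSphere G v n) : n = 0 := by
  obtain ⟨p, hp, rfl⟩ := mem_pathSphere.mp h
  exact Walk.length_eq_zero_iff.mpr (Walk.isPath_iff_nil.mp hp)

theorem degree_le_card_filter_adj_pathSphere_succ_add_one [DecidableRel G.Adj] {v w : V} {n : ℕ}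
    (hn : (n + 1 : ℕ) < G.egirth) (hw : w ∈ pathSphere G v n) :
    G.degree w ≤ #{x ∈ pathSphere G v (n + 1) | G.Adj w x} + 1 := by
  classical
  obtain ⟨p, hp, rfl⟩ := mem_pathSphere.mp hw
  refine (card_le_card fun x hx ↦ ?_).trans (card_insert_le p.snd _)
  have hwx : G.Adj w x := (G.mem_neighborFinset w x).mp hx
  rw [mem_insert, mem_filter, mem_pathSphere]
  exact (eq_snd_or_isPath_cons hp hwx.symm hn).imp_right
    fun hcons ↦ ⟨⟨_, hcons, Walk.length_cons _ _⟩, hwx⟩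

theorem card_filter_adj_pathSphere_le_one [DecidableRel G.Adj] {v x : V} {n : ℕ}
    (hn : (2 * (n + 1) : ℕ) < G.egirth) (hx : x ∈ pathSphere G v (n + 1)) :
    #{w ∈ pathSphere G v n | G.Adj w x} ≤ 1 := by
  obtain ⟨q, hq, hqn⟩ := mem_pathSphere.mp hx
  suffices {w ∈ pathSphere G v n | G.Adj w x} ⊆ {q.snd} from card_le_card this
  intro w hw
  obtain ⟨hwn, hwx⟩ := mem_filter.mp hw
  obtain ⟨p, hp, hpn⟩ := mem_pathSphere.mp hwn
  have hshort : (q.length + 1 : ℕ) < G.egirth := (Nat.cast_le.mpr (by omega)).trans_lt hn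
  refine mem_singleton.mpr ((eq_snd_or_isPath_cons hq hwx hshort).resolve_right fun hcons ↦ ?_)
  have heq : p = .cons hwx q := eq_of_isPath_of_length_add_lt_egirth hp hcons
    ((Nat.cast_le.mpr (by rw [Walk.length_cons]; omega)).trans_lt hn)
  have := congrArg Walk.length heq
  rw [Walk.length_cons] at this
  omega

theorem mul_card_pathSphere_le [DecidableRel G.Adj] {c n : ℕ} {v : V}
    (hdeg : ∀ w ∈ pathSphere G v n, c < G.degree w) (hn : (2 * (n + 1) : ℕ) < G.egirth) :
    #(pathSphere G v n) * c ≤ #(pathSphere G v (n + 1)) := by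
  have hshort : (n + 1 : ℕ) < G.egirth := (Nat.cast_le.mpr (by omega)).trans_lt hn
  rw [← mul_one #(pathSphere G v (n + 1))]
  refine card_mul_le_card_mul G.Adj (fun w hw ↦ ?_)
    fun x hx ↦ card_filter_adj_pathSphere_le_one hn hx
  exact Nat.le_of_lt_succ
    ((hdeg w hw).trans_le (degree_le_card_filter_adj_pathSphere_succ_add_one hshort hw))

theorem pow_le_card_pathSphere [DecidableRel G.Adj] {c n : ℕ} (hdeg : c < G.minDegree)
    (hn : (2 * n : ℕ) < G.egirth) (v : V) : c ^ n ≤ #(pathSphere G v n) := by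
  induction n with
  | zero => simp [pathSphere_zero]
  | succ n ih =>
    calc c ^ (n + 1) = c ^ n * c := pow_succ c n
      _ ≤ #(pathSphere G v n) * c :=
        Nat.mul_le_mul_right c (ih ((Nat.cast_le.mpr (by omega)).trans_lt hn))
      _ ≤ #(pathSphere G v (n + 1)) :=
        mul_card_pathSphere_le (fun w _ ↦ hdeg.trans_le (G.minDegree_le_degree w)) hn

theorem pow_lt_card_of_lt_minDegree [DecidableRel G.Adj] {c n : ℕ} (hdeg : c < G.minDegree)
    (hn : (2 * n : ℕ) < G.egirth) : c ^ n < Fintype.card V := by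
  have : Nontrivial V := by
    by_contra h
    rw [not_nontrivial_iff_subsingleton] at h
    simp [minDegree_of_subsingleton] at hdeg
  obtain ⟨u, v, huv⟩ := exists_pair_ne V
  have hne : pathSphere G v n ≠ univ := by
    intro h
    obtain rfl : n = 0 := eq_zero_of_self_mem_pathSphere (h ▸ mem_univ v)
    exact huv (mem_singleton.mp (pathSphere_zero (G := G) v ▸ h ▸ mem_univ u))
  exact (pow_le_card_pathSphere hdeg hn v).trans_lt ((card_lt_iff_ne_univ _).mpr hne)

end MooreBound

section DenseSubgraph

variable [DecidableRel G.Adj]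

theorem sum_card_filter_adj_erase [DecidableEq V] {S : Finset V} {v : V} (hv : v ∈ S) :
    ∑ u ∈ S, #{w ∈ S | G.Adj u w} =
      ∑ u ∈ S.erase v, #{w ∈ S.erase v | G.Adj u w} + 2 * #{w ∈ S | G.Adj v w} := by
  have hsplit (u : V) :
      #{w ∈ S | G.Adj u w} = #{w ∈ S.erase v | G.Adj u w} + if G.Adj v u then 1 else 0 := by
    simp only [card_filter, ← sum_erase_add S _ hv, G.adj_comm u v]
  have hdeg : ∑ u ∈ S.erase v, (if G.Adj v u then 1 else 0) = #{w ∈ S | G.Adj v w} := by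
    simp [hsplit v]
  rw [← sum_erase_add S _ hv, sum_congr rfl fun u _ ↦ hsplit u, sum_add_distrib, hdeg]
  ring

theorem exists_subset_forall_lt_card_filter_adj {c : ℕ} {S : Finset V}
    (h : 2 * c * #S < ∑ v ∈ S, #{w ∈ S | G.Adj v w}) :
    ∃ T ⊆ S, T.Nonempty ∧ ∀ v ∈ T, c < #{w ∈ T | G.Adj v w} := by
  classical
  obtain ⟨T, hTS, hT⟩ := exists_minimal_le_of_wellFoundedLT
    (fun T : Finset V ↦ 2 * c * #T < ∑ v ∈ T, #{w ∈ T | G.Adj v w}) S h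
  refine ⟨T, hTS, nonempty_of_sum_ne_zero (Nat.ne_zero_of_lt hT.prop), fun v hv ↦ ?_⟩
  by_contra! hlow
  refine hT.not_prop_of_lt (erase_ssubset hv) ?_
  have hdense := hT.prop
  rw [sum_card_filter_adj_erase hv, ← card_erase_add_one hv] at hdense
  linarith

theorem degree_induce_coe_finset (T : Finset V) (v : (T : Set V)) :
    (G.induce (T : Set V)).degree v = #{w ∈ T | G.Adj v w} := by
  rw [← card_neighborFinset_eq_degree, ← card_map (.subtype (· ∈ (T : Set V)))]
  congr 1
  ext w
  simp [and_comm]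

theorem pow_lt_card_of_lt_sum_card_filter_adj {c n : ℕ} {S : Finset V}
    (hS : 2 * c * #S < ∑ v ∈ S, #{w ∈ S | G.Adj v w}) (hn : (2 * n : ℕ) < G.egirth) :
    c ^ n < #S := by
  obtain ⟨T, hTS, hT, hdeg⟩ := exists_subset_forall_lt_card_filter_adj hS
  have : Nonempty (T : Set V) := hT.to_subtype
  have hmin : c < (G.induce (T : Set V)).minDegree :=
    le_minDegree_of_forall_le_degree _ _ fun v ↦
      (hdeg v v.2).trans_eq (degree_induce_coe_finset T v).symm
  have hgirth : G.egirth ≤ (G.induce (T : Set V)).egirth :=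
    IsContained.egirth_le ⟨Copy.induce G T⟩
  calc c ^ n < Fintype.card (T : Set V) :=
        pow_lt_card_of_lt_minDegree hmin (hn.trans_le hgirth)
    _ = #T := Fintype.card_coe T
    _ ≤ #S := card_le_card hTS

end DenseSubgraph

section VertexBoundary

variable [DecidableEq V] [G.LocallyFinite] {X : Finset V}

/-- The open neighbourhood `∂X`: the vertices outside `X` adjacent to a vertex of `X`. Local
finiteness makes it a `Finset` even when the graph is infinite. -/
def vertexBoundary (G : SimpleGraph V) [G.LocallyFinite] (X : Finset V) : Finset V :=
  (X.biUnion fun x ↦ G.neighborFinset x) \ X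

theorem mem_vertexBoundary {y : V} :
    y ∈ vertexBoundary G X ↔ y ∉ X ∧ ∃ x ∈ X, G.Adj x y := by
  simp [vertexBoundary, and_comm]

theorem sum_degree_le_sum_card_filter_adj_union_vertexBoundary [DecidableRel G.Adj] :
    ∑ x ∈ X, G.degree x ≤
      ∑ v ∈ X ∪ vertexBoundary G X, #{w ∈ X ∪ vertexBoundary G X | G.Adj v w} := by
  calc ∑ x ∈ X, G.degree x
      ≤ ∑ x ∈ X, #{w ∈ X ∪ vertexBoundary G X | G.Adj x w} := by
        refine sum_le_sum fun x hx ↦ card_le_card fun y hy ↦ ?_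
        have hxy : G.Adj x y := (G.mem_neighborFinset x y).mp hy
        rw [mem_filter, mem_union, mem_vertexBoundary]
        exact ⟨(em (y ∈ X)).imp_right fun hyX ↦ ⟨hyX, x, hx, hxy⟩, hxy⟩
    _ ≤ _ := sum_le_sum_of_subset subset_union_left

theorem girth_expansion_general {a d g : ℕ} (hgirth : g ≤ G.egirth) (hX : X.Nonempty)
    (hdeg : ∀ x ∈ X, 2 * (a + 1) * d < G.degree x)
    (hXcard : (a + 1) * #X ≤ d ^ ((g - 1) / 2)) : a * #X < #(vertexBoundary G X) := by
  classical
  by_contra! hsmall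
  have hcard : #(X ∪ vertexBoundary G X) ≤ (a + 1) * #X := by
    linarith [card_union_le X (vertexBoundary G X)]
  have hdense : 2 * d * #(X ∪ vertexBoundary G X) <
      ∑ v ∈ X ∪ vertexBoundary G X, #{w ∈ X ∪ vertexBoundary G X | G.Adj v w} :=
    calc 2 * d * #(X ∪ vertexBoundary G X)
        ≤ 2 * d * ((a + 1) * #X) := Nat.mul_le_mul_left _ hcard
      _ = ∑ x ∈ X, 2 * (a + 1) * d := by rw [sum_const, smul_eq_mul]; ring
      _ < ∑ x ∈ X, G.degree x := sum_lt_sum_of_nonempty hX hdeg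
      _ ≤ _ := sum_degree_le_sum_card_filter_adj_union_vertexBoundary
  have hradius : (2 * ((g - 1) / 2) : ℕ) < G.egirth := by
    obtain h | h : 2 * ((g - 1) / 2) < g ∨ 2 * ((g - 1) / 2) < 3 := by omega
    · exact (Nat.cast_lt.mpr h).trans_le hgirth
    · exact (Nat.cast_lt.mpr h).trans_le three_le_egirth
  have hlarge := pow_lt_card_of_lt_sum_card_filter_adj hdense hradius
  exact (hlarge.trans_le (hcard.trans hXcard)).false

end VertexBoundary

end

/-- Graphs of girth at least `g` and minimum degree at least `6(d+1)` expand: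
every nonempty vertex set `X` with `|X| ≤ (1/3) d ^ ⌊(g-1)/2⌋` has `|∂X| > 2|X|`,
where `∂X` is the set of vertices outside `X` adjacent to some vertex of `X`. -/
theorem girth_expansion {V : Type*} [Fintype V] [DecidableEq V] [Nonempty V]
    (G : SimpleGraph V) [DecidableRel G.Adj] (g d : ℕ) (hd : 1 ≤ d)
    (hgirth : ∀ (v : V) (w : G.Walk v v), w.IsCycle → g ≤ w.length)
    (hmin : 6 * (d + 1) ≤ G.minDegree)
    (X : Finset V) (hX : X.Nonempty) (hXcard : 3 * X.card ≤ d ^ ((g - 1) / 2)) :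
    2 * X.card < (Finset.univ.filter fun y => y ∉ X ∧ ∃ x ∈ X, G.Adj x y).card := by
  have hdeg (x : V) (_ : x ∈ X) : 2 * (2 + 1) * d < G.degree x := by
    linarith [G.minDegree_le_degree x]
  simpa only [← mem_vertexBoundary, Finset.filter_univ_mem] using
    girth_expansion_general (SimpleGraph.le_egirth.mpr (mod_cast hgirth)) hX hdeg hXcard
end

section
/- Let H be a vertex-critical graph of chromatic number d ≥ 3 and let C be an even cycle in H. Then H contains an odd (non-bipartite) θ-graph as a subgraph which contains C. -/
/-- `G` is a θ-graph: two distinct vertices joined by three pairwise internally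
disjoint paths, at most one of which has length 1, and whose edges and vertices
exhaust `G`. -/
def IsThetaGraph {V : Type*} (G : SimpleGraph V) : Prop :=
  ∃ (u v : V) (p q r : G.Walk u v), u ≠ v ∧
    p.IsPath ∧ q.IsPath ∧ r.IsPath ∧
    (∀ x ∈ p.support, x ∈ q.support → x = u ∨ x = v) ∧
    (∀ x ∈ p.support, x ∈ r.support → x = u ∨ x = v) ∧
    (∀ x ∈ q.support, x ∈ r.support → x = u ∨ x = v) ∧
    (p.length = 1 → 2 ≤ q.length ∧ 2 ≤ r.length) ∧
    (q.length = 1 → 2 ≤ r.length) ∧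
    (∀ x : V, x ∈ p.support ∨ x ∈ q.support ∨ x ∈ r.support) ∧
    (∀ e ∈ G.edgeSet, e ∈ p.edges ∨ e ∈ q.edges ∨ e ∈ r.edges)

/-!
A vertex-critical graph has no cut vertex: otherwise colourings of two proper parts meeting in a
single vertex `v` could be glued after renaming colours so that they agree at `v`.

In a non-bipartite graph without cut vertex, any two distinct vertices are joined by paths of both
parities. Indeed, if `z` lies on an odd cycle `D`, then from any `u ≠ z` we can reach `D` avoiding
`z` and continue to `z` along either of two arcs, whose lengths have different parities. If moreover
`u` is adjacent to `z`, an even such path together with the edge `uz` is an odd cycle through `u`;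
so, by connectedness, every vertex lies on an odd cycle.

Now 2-colour the even cycle `C`. Two adjacent vertices of `C` are joined by an even path, whose
parity disagrees with the colouring. Cutting this path at its visits to `C`, one of the pieces is an
ear of `C` whose parity disagrees with the colouring, whereas both arcs of `C` between the ends
of that ear agree with it. Hence `C` and the ear form a θ-graph containing an odd cycle.
-/

section

open SimpleGraph Walk

variable {V : Type*} {G : SimpleGraph V}

theorem colorable_of_induce_inter_eq_singleton {n : ℕ} {S T : Set V} {v : V}
    (hcover : S ∪ T = Set.univ) (hinter : S ∩ T = {v})
    (hadj : ∀ x y, G.Adj x y → (x ∈ S ∧ y ∈ S) ∨ (x ∈ T ∧ y ∈ T))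
    (hS : (G.induce S).Colorable n) (hT : (G.induce T).Colorable n) : G.Colorable n := by
  classical
  obtain ⟨f⟩ := hS
  obtain ⟨g⟩ := hT
  have hv : v ∈ S ∧ v ∈ T := hinter.ge rfl
  have mem_T : ∀ {x}, x ∉ S → x ∈ T := fun {x} hx ↦ (hcover.ge (Set.mem_univ x)).resolve_left hx
  let σ : Equiv.Perm (Fin n) := Equiv.swap (g ⟨v, hv.2⟩) (f ⟨v, hv.1⟩)
  let col : V → Fin n := fun x ↦ if hx : x ∈ S then f ⟨x, hx⟩ else σ (g ⟨x, mem_T hx⟩)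
  have col_S : ∀ x (hx : x ∈ S), col x = f ⟨x, hx⟩ := fun x hx ↦ dif_pos hx
  have col_T : ∀ x (hx : x ∈ T), col x = σ (g ⟨x, hx⟩) := by
    intro x hxT
    by_cases hxS : x ∈ S
    · obtain rfl : x = v := hinter.le ⟨hxS, hxT⟩
      rw [col_S x hxS, Equiv.swap_apply_left]
    · exact dif_neg hxS
  refine ⟨Coloring.mk col fun {x y} hxy ↦ ?_⟩
  rcases hadj x y hxy with ⟨hx, hy⟩ | ⟨hx, hy⟩
  · rw [col_S x hx, col_S y hy]
    exact f.valid hxy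
  · rw [col_T x hx, col_T y hy]
    exact σ.injective.ne (g.valid hxy)

theorem colorable_of_not_reachable_induce_ne {n : ℕ} {v a b : V} {ha : a ≠ v} {hb : b ≠ v}
    (hab : ¬ (G.induce {w | w ≠ v}).Reachable ⟨a, ha⟩ ⟨b, hb⟩)
    (hGa : (G.induce {w | w ≠ a}).Colorable n) (hGb : (G.induce {w | w ≠ b}).Colorable n) :
    G.Colorable n := by
  obtain ⟨A, haA, hbA, hvA, hadj⟩ : ∃ A : Set V, a ∈ A ∧ b ∉ A ∧ v ∉ A ∧
      ∀ x y, G.Adj x y → x ∈ A → y ≠ v → y ∈ A := by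
    refine ⟨{x | ∃ hx : x ≠ v, (G.induce {w | w ≠ v}).Reachable ⟨a, ha⟩ ⟨x, hx⟩},
      ⟨ha, Reachable.rfl⟩, fun ⟨_, h⟩ ↦ hab h, fun ⟨h, _⟩ ↦ h rfl, ?_⟩
    rintro x y hxy ⟨hx, h⟩ hy
    have hxy' : (G.induce {w | w ≠ v}).Adj ⟨x, hx⟩ ⟨y, hy⟩ := hxy
    exact ⟨hy, h.trans hxy'.reachable⟩
  have colorable_of_notMem {S : Set V} {w : V} (hw : w ∉ S)
      (h : (G.induce {x | x ≠ w}).Colorable n) : (G.induce S).Colorable n :=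
    h.of_hom (induceHomOfLE G fun _ hx ↦ ne_of_mem_of_not_mem hx hw).toHom
  refine colorable_of_induce_inter_eq_singleton (S := insert v A) (T := Aᶜ) (v := v)
    (by grind) (by grind) (fun x y hxy ↦ ?_)
    (colorable_of_notMem (by grind) hGb) (colorable_of_notMem (by grind) hGa)
  have hxA := hadj x y hxy
  have hyA := hadj y x hxy.symm
  grind

theorem preconnected_induce_ne_of_chromaticNumber_lt
    (hcrit : ∀ v, (G.induce {w | w ≠ v}).chromaticNumber < G.chromaticNumber) (v : V) :
    (G.induce {w | w ≠ v}).Preconnected := by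
  rintro ⟨a, ha⟩ ⟨b, hb⟩
  by_contra hab
  have hlt := max_lt (hcrit a) (hcrit b)
  obtain ⟨n, hn⟩ := ENat.ne_top_iff_exists.mp hlt.ne_top
  rw [← hn] at hlt
  refine hlt.not_ge (colorable_of_not_reachable_induce_ne hab ?_ ?_).chromaticNumber_le
  · exact chromaticNumber_le_iff_colorable.mp (hn ▸ le_max_left _ _)
  · exact chromaticNumber_le_iff_colorable.mp (hn ▸ le_max_right _ _)

theorem isCycle_cons_of_isPath {u v : V} {p : G.Walk v u} (hp : p.IsPath) (h : G.Adj u v)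
    (hlen : p.length ≠ 1) : (cons h p).IsCycle :=
  (cons_isCycle_iff p h).mpr
    ⟨hp, fun he ↦ hlen (hp.length_eq_one_of_mem_edges (Sym2.eq_swap ▸ he))⟩

theorem exists_isCycle_odd_length {u : V} (w : G.Walk u u) (hw : Odd w.length) :
    ∃ (v : V) (C : G.Walk v v), C.IsCycle ∧ Odd C.length := by
  induction hn : w.length using Nat.strong_induction_on generalizing u with
  | _ n ih =>
  by_cases hcyc : w.IsCycle
  · exact ⟨u, w, hcyc, hw⟩
  cases w with
  | nil => simp at hw
  | @cons _ v _ h p =>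
    have hp : ¬ p.IsPath := fun hp ↦ hcyc <| isCycle_cons_of_isPath hp h fun hp1 ↦ by
      simp [hp1, Nat.odd_iff] at hw
    rw [isPath_iff_isSubwalk_imp_nil] at hp
    push Not at hp
    obtain ⟨x, c, ⟨a, b, rfl⟩, hc⟩ := hp
    rw [not_nil_iff_lt_length] at hc
    simp only [length_cons, length_append] at hw hn
    -- Cutting the closed subwalk `c` out of `w` leaves a closed walk, and one of the two is odd.
    by_cases hodd : Odd c.length
    · exact ih c.length (by lia) c hodd rfl
    · refine ih _ ?_ (cons h (a.append b)) ?_ rfl <;> simp only [length_cons, length_append]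
      · lia
      · grind

theorem isPath_append {u v w : V} {p : G.Walk u v} {q : G.Walk v w} (hp : p.IsPath)
    (hq : q.IsPath) (h : ∀ x ∈ p.support, x ∈ q.support → x = v) : (p.append q).IsPath := by
  have hnodup := hq.support_nodup
  rw [← cons_tail_support, List.nodup_cons] at hnodup
  rw [isPath_def, support_append, List.nodup_append']
  exact ⟨hp.support_nodup, hnodup.2, fun x hx hx' ↦
    hnodup.1 (h x hx (List.mem_of_mem_tail hx') ▸ hx')⟩

theorem isPath_dropUntil_of_isCycle [DecidableEq V] {u v : V} {C : G.Walk u u} (hC : C.IsCycle)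
    (hv : v ∈ C.support) (huv : u ≠ v) : (C.dropUntil v hv).IsPath :=
  IsCycle.isPath_of_append_right (not_nil_of_ne huv) ((C.take_spec hv).symm ▸ hC)

theorem exists_isPath_notMem_support_first_mem {S : Finset V} {u z s : V}
    (hconn : (G.induce {w | w ≠ z}).Preconnected) (huz : u ≠ z) (hsz : s ≠ z) (hs : s ∈ S) :
    ∃ t ∈ S, ∃ p : G.Walk u t, p.IsPath ∧ z ∉ p.support ∧ ∀ x ∈ S, x ∈ p.support → x = t := by
  classical
  obtain ⟨R, hR⟩ := (hconn ⟨u, huz⟩ ⟨s, hsz⟩).exists_isPath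
  obtain ⟨R', hR', hzR'⟩ : ∃ R' : G.Walk u s, R'.IsPath ∧ z ∉ R'.support := by
    refine ⟨R.map (Embedding.induce _).toHom, hR.map Subtype.val_injective, fun h ↦ ?_⟩
    obtain ⟨x, -, hx⟩ := List.mem_map.mp (Walk.support_map _ R ▸ h)
    exact x.2 hx
  obtain ⟨t, htS, ht, hfirst⟩ :=
    R'.exists_mem_support_forall_mem_support_imp_eq S ⟨s, by simp [hs]⟩
  exact ⟨t, htS, R'.takeUntil t ht, hR'.takeUntil ht,
    fun h ↦ hzR' (R'.support_takeUntil_subset_support ht h), hfirst⟩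

theorem exists_isPath_length_modEq_of_isCycle {u z : V} {D : G.Walk z z} (hD : D.IsCycle)
    (hodd : Odd D.length) (hconn : (G.induce {w | w ≠ z}).Preconnected) (huz : u ≠ z) (n : ℕ) :
    ∃ p : G.Walk u z, p.IsPath ∧ p.length ≡ n [MOD 2] := by
  classical
  have hsnd : D.snd ≠ z := (D.adj_snd hD.not_nil).ne'
  obtain ⟨t, htD, p, hp, hzp, hfirst⟩ :=
    exists_isPath_notMem_support_first_mem (S := D.support.toFinset) hconn huz hsnd (by simp)
  replace htD : t ∈ D.support := by simpa using htD
  have hzt : z ≠ t := fun h ↦ hzp (h ▸ p.end_mem_support)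
  have hfirst' {q : G.Walk t z} (hq : q.support ⊆ D.support) (x : V) (hxp : x ∈ p.support)
      (hxq : x ∈ q.support) : x = t := hfirst x (by simpa using hq hxq) hxp
  have hback : (p.append (D.takeUntil t htD).reverse).IsPath :=
    isPath_append hp (hD.isPath_takeUntil htD).reverse <|
      hfirst' (by simpa using D.support_takeUntil_subset_support htD)
  have hforth : (p.append (D.dropUntil t htD)).IsPath :=
    isPath_append hp (isPath_dropUntil_of_isCycle hD htD hzt) <|
      hfirst' (D.support_dropUntil_subset_support htD)
  have hlen : (D.takeUntil t htD).length + (D.dropUntil t htD).length = D.length := by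
    rw [← length_append, take_spec]
  by_cases hn : (p.append (D.dropUntil t htD)).length ≡ n [MOD 2]
  · exact ⟨_, hforth, hn⟩
  · refine ⟨_, hback, ?_⟩
    rw [length_append, Nat.ModEq] at hn
    rw [length_append, length_reverse, Nat.ModEq]
    grind

theorem exists_isCycle_odd_of_adj {z z' : V} {D : G.Walk z z} (hD : D.IsCycle)
    (hodd : Odd D.length) (hconn : (G.induce {w | w ≠ z}).Preconnected) (hadj : G.Adj z z') :
    ∃ D' : G.Walk z' z', D'.IsCycle ∧ Odd D'.length := by
  obtain ⟨p, hp, hlen⟩ := exists_isPath_length_modEq_of_isCycle hD hodd hconn hadj.ne' 0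
  have heven : Even p.length := Nat.even_iff.mpr hlen
  refine ⟨cons hadj.symm p.reverse, isCycle_cons_of_isPath hp.reverse _ ?_, ?_⟩
  · rw [length_reverse]
    exact fun h ↦ by simp [h] at heven
  · simpa [Nat.odd_add_one] using heven

theorem exists_isCycle_odd_of_not_isBipartite (hconn : ∀ v, (G.induce {w | w ≠ v}).Preconnected)
    (hbip : ¬ G.IsBipartite) (v : V) : ∃ D : G.Walk v v, D.IsCycle ∧ Odd D.length := by
  obtain ⟨u, w, hw⟩ : ∃ (u : V) (w : G.Walk u u), ¬ Even w.length := by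
    simpa [IsBipartite, two_colorable_iff_forall_loop_even] using hbip
  obtain ⟨z, D, hD, hodd⟩ := exists_isCycle_odd_length w (Nat.not_even_iff_odd.mp hw)
  obtain ⟨q⟩ : G.Reachable z v := by
    by_cases hvz : v = z
    · exact hvz ▸ .rfl
    · obtain ⟨p, -⟩ := exists_isPath_length_modEq_of_isCycle hD hodd (hconn z) hvz 0
      exact p.reverse.reachable
  induction q with
  | nil => exact ⟨D, hD, hodd⟩
  | cons h _ ih =>
    obtain ⟨D', hD', hodd'⟩ := exists_isCycle_odd_of_adj hD hodd (hconn _) h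
    exact ih D' hD' hodd'

theorem exists_isPath_length_modEq_of_not_isBipartite
    (hconn : ∀ v, (G.induce {w | w ≠ v}).Preconnected) (hbip : ¬ G.IsBipartite) {u v : V}
    (huv : u ≠ v) (n : ℕ) : ∃ p : G.Walk u v, p.IsPath ∧ p.length ≡ n [MOD 2] :=
  have ⟨_, hD, hodd⟩ := exists_isCycle_odd_of_not_isBipartite hconn hbip v
  exists_isPath_length_modEq_of_isCycle hD hodd (hconn v) huv n

theorem even_iff_even_of_getVert_eq {v : V} {C : G.Walk v v} (hC : C.IsCycle)
    (heven : Even C.length) {i j : ℕ} (hi : i ≤ C.length) (hj : j ≤ C.length)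
    (hij : C.getVert i = C.getVert j) : Even i ↔ Even j := by
  by_cases hv : C.getVert i = v
  · have hi' := (hC.getVert_endpoint_iff hi).mp hv
    have hj' := (hC.getVert_endpoint_iff hj).mp (hij ▸ hv)
    grind
  · have pos_of_ne {k : ℕ} (hk : C.getVert k ≠ v) : 1 ≤ k :=
      Nat.one_le_iff_ne_zero.mpr fun h ↦ hk (h ▸ C.getVert_zero)
    rw [hC.getVert_injOn ⟨pos_of_ne hv, hi⟩ ⟨pos_of_ne (hij ▸ hv), hj⟩ hij]

theorem nonempty_coloring_bool_spanningCoe_toSubgraph {v : V} {C : G.Walk v v} (hC : C.IsCycle)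
    (heven : Even C.length) : Nonempty (C.toSubgraph.spanningCoe.Coloring Bool) := by
  classical
  let col (x : V) : Bool := decide (∃ i ≤ C.length, C.getVert i = x ∧ Even i)
  have hcol {i : ℕ} (hi : i ≤ C.length) : col (C.getVert i) = decide (Even i) := by
    rw [decide_eq_decide]
    exact ⟨fun ⟨j, hj, hij, hjeven⟩ ↦ (even_iff_even_of_getVert_eq hC heven hj hi hij).mp hjeven,
      fun h ↦ ⟨i, hi, rfl, h⟩⟩
  have hstep {i : ℕ} (hi : i < C.length) : col (C.getVert i) ≠ col (C.getVert (i + 1)) := by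
    simp only [hcol hi.le, hcol hi, Nat.even_add_one, ne_eq, decide_eq_decide, iff_not_self,
      not_false_eq_true]
  refine ⟨Coloring.mk col fun {x y} hxy ↦ ?_⟩
  rw [Subgraph.spanningCoe_adj, toSubgraph_adj_iff] at hxy
  obtain ⟨i, hi, hlt⟩ := hxy
  rcases Sym2.eq_iff.mp hi with ⟨rfl, rfl⟩ | ⟨rfl, rfl⟩
  · exact hstep hlt
  · exact (hstep hlt).symm

theorem even_length_iff_of_toSubgraph_le {Γ : G.Subgraph} (c : Γ.spanningCoe.Coloring Bool)
    {a b : V} {p : G.Walk a b} (hp : p.toSubgraph ≤ Γ) : Even p.length ↔ (c a ↔ c b) := by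
  have hedges : ∀ e ∈ p.edges, e ∈ Γ.spanningCoe.edgeSet := fun e he ↦ by
    rw [Subgraph.edgeSet_spanningCoe]
    exact Subgraph.edgeSet_mono hp (p.mem_edges_toSubgraph.mpr he)
  rw [← p.length_transfer hedges]
  exact c.even_length_iff_congr _

/-- Two paths with the same ends are internally disjoint if they meet only in those ends. The
definition makes sense for all walks and does not ask `p` and `q` to be paths. -/
def InternallyDisjoint {u v : V} (p q : G.Walk u v) : Prop :=
  ∀ x ∈ p.support, x ∈ q.support → x = u ∨ x = v

theorem exists_internallyDisjoint_arcs_of_isCycle {v a b : V} {C : G.Walk v v} (hC : C.IsCycle)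
    (ha : a ∈ C.support) (hb : b ∈ C.support) (hab : a ≠ b) :
    ∃ q r : G.Walk a b, q.IsPath ∧ r.IsPath ∧ InternallyDisjoint q r ∧
      q.toSubgraph ⊔ r.toSubgraph = C.toSubgraph ∧ q.length + r.length = C.length := by
  classical
  have hb' : b ∈ (C.rotate a ha).support := by simpa using hb
  obtain ⟨q, r, hqr⟩ := mem_support_iff_exists_append.mp hb'
  have hrot : (q.append r).IsCycle := hqr ▸ hC.rotate ha
  refine ⟨q, r.reverse, hrot.isPath_of_append_left (not_nil_of_ne hab.symm),
    (hrot.isPath_of_append_right (not_nil_of_ne hab)).reverse, fun x hxq hxr ↦ ?_, ?_, ?_⟩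
  · have hdisj := hrot.support_nodup
    rw [tail_support_append, List.nodup_append'] at hdisj
    have hxqr := @hdisj.2.2 x
    rw [support_reverse, List.mem_reverse] at hxr
    rw [mem_support_iff] at hxq hxr
    tauto
  · rw [toSubgraph_reverse, ← toSubgraph_append, ← hqr, toSubgraph_rotate]
  · rw [length_reverse, ← length_append, ← hqr, length_rotate]

/-- An ear of a vertex set `S`: a path with both ends in `S` and all inner vertices outside `S`.
The ends may coincide, in which case the path is trivial. -/
def IsEar (S : Set V) {u v : V} (p : G.Walk u v) : Prop :=
  p.IsPath ∧ u ∈ S ∧ v ∈ S ∧ ∀ x ∈ p.support, x ∈ S → x = u ∨ x = v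

theorem exists_isEar_of_not_even_length_iff {S : Set V} (c : V → Bool) {u v : V} {p : G.Walk u v}
    (hp : p.IsPath) (hu : u ∈ S) (hv : v ∈ S) (hpc : ¬ (Even p.length ↔ (c u ↔ c v))) :
    ∃ (a b : V) (q : G.Walk a b), IsEar S q ∧ ¬ (Even q.length ↔ (c a ↔ c b)) := by
  induction hn : p.length using Nat.strong_induction_on generalizing u v with
  | _ n ih =>
  by_cases hear : ∀ x ∈ p.support, x ∈ S → x = u ∨ x = v
  · exact ⟨u, v, p, ⟨hp, hu, hv, hear⟩, hpc⟩
  push Not at hear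
  obtain ⟨x, hx, hxS, hxu, hxv⟩ := hear
  obtain ⟨q, r, hq, hr, rfl⟩ := hp.mem_support_iff_exists_append.mp hx
  have hq0 : 0 < q.length := not_nil_iff_lt_length.mp (not_nil_of_ne hxu.symm)
  have hr0 : 0 < r.length := not_nil_iff_lt_length.mp (not_nil_of_ne hxv)
  rw [length_append] at hpc hn
  by_cases hqc : Even q.length ↔ (c u ↔ c x)
  · refine ih _ (by lia) hr hxS hv (fun hrc ↦ hpc ?_) rfl
    rw [Nat.even_add, hqc, hrc]
    cases c u <;> cases c x <;> cases c v <;> decide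
  · exact ih _ (by lia) hq hu hxS hqc rfl

/-- The three paths of a θ-graph inside a larger graph: `IsThetaGraph` without the requirement that
the paths cover the graph. That at most one of the paths has length 1 is encoded as there. -/
structure IsThetaTriple {u v : V} (p q r : G.Walk u v) : Prop where
  ne : u ≠ v
  isPath_fst : p.IsPath
  isPath_snd : q.IsPath
  isPath_thd : r.IsPath
  disjoint_fst_snd : InternallyDisjoint p q
  disjoint_fst_thd : InternallyDisjoint p r
  disjoint_snd_thd : InternallyDisjoint q r
  two_le_of_fst : p.length = 1 → 2 ≤ q.length ∧ 2 ≤ r.length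
  two_le_of_snd : q.length = 1 → 2 ≤ r.length

theorem InternallyDisjoint.of_map {W : Type*} {G' : SimpleGraph W} {f : G →g G'}
    (hf : Function.Injective f) {u v : V} {p q : G.Walk u v}
    (h : InternallyDisjoint (p.map f) (q.map f)) : InternallyDisjoint p q := fun x hp hq ↦ by
  simpa only [hf.eq_iff] using h (f x) (by simp [hp, hf.eq_iff]) (by simp [hq, hf.eq_iff])

theorem IsThetaTriple.of_map {W : Type*} {G' : SimpleGraph W} {f : G →g G'}
    (hf : Function.Injective f) {u v : V} {p q r : G.Walk u v}
    (h : IsThetaTriple (p.map f) (q.map f) (r.map f)) : IsThetaTriple p q r where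
  ne := fun huv ↦ h.ne (congrArg f huv)
  isPath_fst := h.isPath_fst.of_map
  isPath_snd := h.isPath_snd.of_map
  isPath_thd := h.isPath_thd.of_map
  disjoint_fst_snd := h.disjoint_fst_snd.of_map hf
  disjoint_fst_thd := h.disjoint_fst_thd.of_map hf
  disjoint_snd_thd := h.disjoint_snd_thd.of_map hf
  two_le_of_fst := by simpa only [length_map] using h.two_le_of_fst
  two_le_of_snd := by simpa only [length_map] using h.two_le_of_snd

theorem exists_map_hom_eq {Γ : G.Subgraph} {u v : Γ.verts} {p : G.Walk (Γ.hom u) (Γ.hom v)}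
    (hp : p.toSubgraph ≤ Γ) : ∃ p' : Γ.coe.Walk u v, p'.map Γ.hom = p :=
  ⟨p.mapToSubgraph.map (Subgraph.inclusion hp),
    (Walk.map_map _ _ _).trans p.map_mapToSubgraph_hom⟩

theorem IsThetaTriple.isThetaGraph {u v : V} {p q r : G.Walk u v} (h : IsThetaTriple p q r)
    (htop : p.toSubgraph ⊔ (q.toSubgraph ⊔ r.toSubgraph) = ⊤) : IsThetaGraph G := by
  refine ⟨u, v, p, q, r, h.ne, h.isPath_fst, h.isPath_snd, h.isPath_thd, h.disjoint_fst_snd,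
    h.disjoint_fst_thd, h.disjoint_snd_thd, h.two_le_of_fst, h.two_le_of_snd, fun x ↦ ?_,
    fun e he ↦ ?_⟩
  · have hx : x ∈ (⊤ : G.Subgraph).verts := Set.mem_univ x
    rw [← htop] at hx
    simpa using hx
  · rw [← Subgraph.edgeSet_top, ← htop] at he
    simpa using he

theorem IsThetaTriple.isThetaGraph_coe {Γ : G.Subgraph} {u v : Γ.verts}
    {p q r : G.Walk (Γ.hom u) (Γ.hom v)} (h : IsThetaTriple p q r)
    (hΓ : p.toSubgraph ⊔ (q.toSubgraph ⊔ r.toSubgraph) = Γ) : IsThetaGraph Γ.coe := by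
  obtain ⟨p, rfl⟩ := exists_map_hom_eq (le_sup_left.trans hΓ.le)
  obtain ⟨q, rfl⟩ := exists_map_hom_eq ((le_sup_of_le_right le_sup_left).trans hΓ.le)
  obtain ⟨r, rfl⟩ := exists_map_hom_eq ((le_sup_of_le_right le_sup_right).trans hΓ.le)
  refine (h.of_map Γ.hom_injective).isThetaGraph (Subgraph.coeSubgraph_injective Γ ?_)
  simpa only [toSubgraph_map, ← Subgraph.map_sup, Subgraph.map_hom_top] using hΓ

theorem exists_isCycle_odd_coe {Γ : G.Subgraph} {u v : Γ.verts}
    {p q : G.Walk (Γ.hom u) (Γ.hom v)} (hp : p.toSubgraph ≤ Γ) (hq : q.toSubgraph ≤ Γ)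
    (hodd : Odd (p.length + q.length)) :
    ∃ (x : Γ.verts) (w : Γ.coe.Walk x x), w.IsCycle ∧ Odd w.length := by
  obtain ⟨p, rfl⟩ := exists_map_hom_eq hp
  obtain ⟨q, rfl⟩ := exists_map_hom_eq hq
  exact exists_isCycle_odd_length (p.append q.reverse) (by
    simpa only [length_append, length_reverse, length_map] using hodd)

theorem exists_isThetaTriple_of_isEar {v a b : V} {C : G.Walk v v} (hC : C.IsCycle)
    (c : C.toSubgraph.spanningCoe.Coloring Bool) {p : G.Walk a b}
    (hp : IsEar {x | x ∈ C.support} p) (hpc : ¬ (Even p.length ↔ (c a ↔ c b))) :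
    ∃ q r : G.Walk a b, IsThetaTriple p q r ∧ q.toSubgraph ⊔ r.toSubgraph = C.toSubgraph ∧
      Odd (p.length + q.length) := by
  obtain ⟨hpath, ha, hb, hear⟩ := hp
  have hab : a ≠ b := by
    rintro rfl
    simp [length_eq_zero_iff.mpr (isPath_iff_nil.mp hpath)] at hpc
  obtain ⟨q, r, hq, hr, hqr, hsup, hlen⟩ := exists_internallyDisjoint_arcs_of_isCycle hC ha hb hab
  have hqC : q.toSubgraph ≤ C.toSubgraph := hsup ▸ le_sup_left
  have hrC : r.toSubgraph ≤ C.toSubgraph := hsup ▸ le_sup_right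
  have hqc := even_length_iff_of_toSubgraph_le c hqC
  have hrc := even_length_iff_of_toSubgraph_le c hrC
  have disjoint_of_le {s : G.Walk a b} (hs : s.toSubgraph ≤ C.toSubgraph) :
      InternallyDisjoint p s := fun x hxp hxs ↦
    hear x hxp (C.mem_verts_toSubgraph.mp (hs.1 (s.mem_verts_toSubgraph.mpr hxs)))
  have hq0 : 0 < q.length := not_nil_iff_lt_length.mp (not_nil_of_ne hab)
  have hr0 : 0 < r.length := not_nil_iff_lt_length.mp (not_nil_of_ne hab)
  have hC3 := hC.three_le_length
  refine ⟨q, r, ⟨hab, hpath, hq, hr, disjoint_of_le hqC, disjoint_of_le hrC, hqr, fun hp1 ↦ ?_,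
    by lia⟩, hsup, ?_⟩
  · rw [← hqc, hp1] at hpc
    have hqeven : Even q.length := by simpa using hpc
    have hreven : Even r.length := hrc.mpr (hqc.mp hqeven)
    rw [Nat.even_iff] at hqeven hreven
    lia
  · rw [← hqc] at hpc
    grind

theorem even_cycle_in_odd_theta_general {V : Type*} (H : SimpleGraph V)
    (hconn : ∀ v, (H.induce {w | w ≠ v}).Preconnected) (hbip : ¬ H.IsBipartite)
    (v : V) (C : H.Walk v v) (hC : C.IsCycle) (hCeven : Even C.length) :
    ∃ Γ : H.Subgraph, IsThetaGraph Γ.coe ∧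
      (∃ (x : Γ.verts) (w : Γ.coe.Walk x x), w.IsCycle ∧ Odd w.length) ∧
      (∀ e ∈ C.edges, e ∈ Γ.edgeSet) := by
  obtain ⟨c⟩ := nonempty_coloring_bool_spanningCoe_toSubgraph hC hCeven
  have hadj := C.toSubgraph_adj_snd hC.not_nil
  obtain ⟨p₀, hp₀, hp₀even⟩ := exists_isPath_length_modEq_of_not_isBipartite hconn hbip hadj.ne 0
  have hp₀c : ¬ (Even p₀.length ↔ (c v ↔ c C.snd)) := by
    simpa [Nat.even_iff.mpr hp₀even] using c.valid hadj
  obtain ⟨a, b, p, hp, hpc⟩ := exists_isEar_of_not_even_length_iff (S := {x | x ∈ C.support}) c hp₀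
    C.start_mem_support (C.getVert_mem_support 1) hp₀c
  obtain ⟨q, r, hθ, hqr, hodd⟩ := exists_isThetaTriple_of_isEar hC c hp hpc
  set Γ := p.toSubgraph ⊔ (q.toSubgraph ⊔ r.toSubgraph)
  have hpΓ : p.toSubgraph ≤ Γ := le_sup_left
  let a' : Γ.verts := ⟨a, hpΓ.1 p.start_mem_verts_toSubgraph⟩
  let b' : Γ.verts := ⟨b, hpΓ.1 p.end_mem_verts_toSubgraph⟩
  refine ⟨Γ, IsThetaTriple.isThetaGraph_coe (u := a') (v := b') hθ rfl,
    exists_isCycle_odd_coe (u := a') (v := b') hpΓ (le_sup_of_le_right le_sup_left) hodd,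
    fun e he ↦ ?_⟩
  exact Subgraph.edgeSet_mono (hqr ▸ le_sup_right) (C.mem_edges_toSubgraph.mpr he)

end

/-- In a vertex-critical graph of chromatic number `d ≥ 3`, every even cycle `C` is
contained in an odd (non-bipartite) θ-subgraph. -/
theorem even_cycle_in_odd_theta {V : Type*} [Fintype V] (H : SimpleGraph V)
    (d : ℕ) (hd : 3 ≤ d) (hχ : H.chromaticNumber = (d : ℕ∞))
    (hcrit : ∀ v : V, (H.induce {w | w ≠ v}).chromaticNumber < (d : ℕ∞))
    (v : V) (C : H.Walk v v) (hC : C.IsCycle) (hCeven : Even C.length) :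
    ∃ Γ : H.Subgraph, IsThetaGraph Γ.coe ∧
      (∃ (x : Γ.verts) (w : Γ.coe.Walk x x), w.IsCycle ∧ Odd w.length) ∧
      (∀ e ∈ C.edges, e ∈ Γ.edgeSet) := by
  exact even_cycle_in_odd_theta_general H
    (preconnected_induce_ne_of_chromaticNumber_lt (hχ ▸ hcrit))
    (SimpleGraph.chromaticNumber_le_two_iff_isBipartite.not.mp
      (by rw [hχ]; exact_mod_cast Nat.not_le_of_lt hd)) v C hC hCeven
end

section
/- For every k ≥ 2 and n ≥ 1, every finite simple graph on n vertices with no cycle of length exactly 2k has at most 8k·n^{1+1/k} edges. -/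
/-!
Averaging over two-colourings and then deleting vertices of small degree, a graph with more than
`8k·n^{1+1/k}` edges contains a bipartite subgraph of minimum degree more than `4k·n^{1/k}`.
Consider the breadth-first layers `L_0, L_1, …` around a vertex of this subgraph. If the edges
between `L_i` and `L_{i+1}` numbered at most `k(|L_i| + |L_{i+1}|)` for every `i < k`, the minimum
degree would force `|L_{i+1}| > n^{1/k} |L_i|`, and hence `|L_k| > n`. So two consecutive layers
span more edges than that for some `i < k`, and therefore contain a cycle of length more than `2k`
with a chord.

Verstraëte's lemma says that, on a cycle of length `m` with a chord, a colouring that agrees at the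
ends of every path of some length `s`, `0 < s < m`, has period two around the cycle. Let the
vertices of the chorded cycle in `L_i` have their common ancestor `l + 1` generations up the
search tree, with `l` least possible, and colour them by their ancestors `l` generations up; this
colouring is not constant. So a path of length `2k - 2(l + 1)` along the chorded cycle joins two
vertices of `L_i` whose tree paths meet exactly `l + 1` generations up, and these tree paths close
it to a cycle of length `2k`.
-/

open Finset Function SimpleGraph

section Periodic

variable {α : Type*}

theorem exists_pos_forall_periodic_iff_dvd {f : ℤ → α} {m : ℤ} (hm : m ≠ 0) (hf : Periodic f m) :
    ∃ p > 0, ∀ q, Periodic f q ↔ p ∣ q := by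
  let periods : AddSubgroup ℤ :=
    { carrier := {q | Periodic f q}
      zero_mem' := periodic_with_period_zero f
      add_mem' := Periodic.add_period
      neg_mem' := Periodic.neg }
  obtain ⟨p, hp⟩ := Int.subgroup_cyclic periods
  have periodic_iff_dvd (q : ℤ) : Periodic f q ↔ p ∣ q := by
    rw [← Int.mem_zmultiples_iff, AddSubgroup.zmultiples_eq_closure, ← hp]
    rfl
  have hp0 : p ≠ 0 := by
    rintro rfl
    exact hm (zero_dvd_iff.mp ((periodic_iff_dvd m).mp hf))
  exact ⟨|p|, abs_pos.mpr hp0, fun q ↦ by rw [periodic_iff_dvd, abs_dvd]⟩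

theorem eq_of_periodic_of_eqOn_Ico {f g : ℤ → α} {p a : ℤ} (hp : 0 < p) (hf : Periodic f p)
    (hg : Periodic g p) (h : Set.EqOn f g (Set.Ico a (a + p))) : f = g := by
  have hfg : Periodic (fun x ↦ (f x, g x)) p := fun x ↦ Prod.ext (hf x) (hg x)
  funext x
  obtain ⟨y, hy, hxy⟩ := hfg.exists_mem_Ico hp x a
  obtain ⟨hfx, hgx⟩ := Prod.mk.inj hxy
  rw [hfx, hgx, h hy]

end Periodic

section Walk

variable {V : Type*} {G : SimpleGraph V}

theorem exists_walk_support_eq_map_range (q : ℕ → V) (n : ℕ)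
    (hq : ∀ i < n, G.Adj (q i) (q (i + 1))) :
    ∃ p : G.Walk (q 0) (q n), p.support = (List.range (n + 1)).map q := by
  induction n with
  | zero => exact ⟨.nil, rfl⟩
  | succ n ih =>
    obtain ⟨p, hp⟩ := ih fun i hi ↦ hq i (by lia)
    refine ⟨p.concat (hq n (by lia)), ?_⟩
    rw [Walk.support_concat, hp, List.range_succ (n := n + 1), List.map_append, List.map_singleton]

end Walk

/-- A cycle of `G` of length `m` together with a chord cutting off an arc of length `r`. The
vertices are listed by `ℤ` with period `m`, so that positions on the cycle can be shifted and
reflected freely; the chord joins positions `0` and `r`. -/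
structure ChordedCycle {V : Type*} (G : SimpleGraph V) (m r : ℤ) where
  vert : ℤ → V
  vert_eq_iff (x y : ℤ) : vert x = vert y ↔ x ≡ y [ZMOD m]
  adj_succ (x : ℤ) : G.Adj (vert x) (vert (x + 1))
  adj_chord : G.Adj (vert 0) (vert r)
  two_le : 2 ≤ r
  add_two_le : r + 2 ≤ m

namespace ChordedCycle

variable {V α : Type*} {G : SimpleGraph V} {m r : ℤ} {u : ChordedCycle G m r} {f : V → α} {s : ℕ}

/-- The colouring `f` takes the same value at both ends of every path of length `s` that stays on
the vertices of the chorded cycle. -/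
def PathInvariant (u : ChordedCycle G m r) (f : V → α) (s : ℕ) : Prop :=
  ∀ ⦃a b : V⦄ (p : G.Walk a b), p.IsPath → p.length = s → (∀ v ∈ p.support, v ∈ Set.range u.vert) →
    f a = f b

theorem periodic_vert (u : ChordedCycle G m r) : Periodic u.vert m := fun x ↦
  (u.vert_eq_iff _ _).mpr (by simp)

theorem PathInvariant.eq_of_injOn (h : u.PathInvariant f s) (e : ℕ → ℤ)
    (hinj : ∀ i ≤ s, ∀ j ≤ s, e i ≡ e j [ZMOD m] → i = j)
    (hadj : ∀ i < s, G.Adj (u.vert (e i)) (u.vert (e (i + 1)))) :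
    f (u.vert (e 0)) = f (u.vert (e s)) := by
  obtain ⟨p, hp⟩ := exists_walk_support_eq_map_range (fun i ↦ u.vert (e i)) s hadj
  refine h p ?_ ?_ ?_
  · rw [Walk.isPath_def, hp]
    refine List.nodup_range.map_on fun i hi j hj hij ↦ ?_
    rw [List.mem_range, Nat.lt_succ_iff] at hi hj
    exact hinj i hi j hj ((u.vert_eq_iff _ _).mp hij)
  · have := congrArg List.length hp
    simpa using this
  · intro v hv
    rw [hp, List.mem_map] at hv
    obtain ⟨i, -, rfl⟩ := hv
    exact ⟨e i, rfl⟩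

theorem PathInvariant.periodic (h : u.PathInvariant f s) (hs : s < m) :
    Periodic (f ∘ u.vert) s := fun x ↦ by
  have := h.eq_of_injOn (fun i ↦ x + i)
    (fun i hi j hj hij ↦ by
      have := Int.eq_zero_of_abs_lt_dvd hij.dvd (by grind)
      lia)
    (fun i _ ↦ by simpa [add_assoc] using u.adj_succ (x + i))
  simpa using this.symm

theorem adj_vert_add_unit (u : ChordedCycle G m r) (ε : ℤˣ) (x : ℤ) :
    G.Adj (u.vert x) (u.vert (x + ε)) := by
  rcases Int.units_eq_one_or ε with rfl | rfl
  · exact u.adj_succ x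
  · simpa [← sub_eq_add_neg] using (u.adj_succ (x - 1)).symm

theorem PathInvariant.eq_across_chord (h : u.PathInvariant f s) (hs : s < m) (ε δ : ℤˣ) {a b : ℕ}
    (hab : a + b + 1 = s)
    (hdisj : ∀ i ≤ a, ∀ j ≤ b, r + δ * j - ε * i ∈ Set.Ioo 0 m) :
    f (u.vert (ε * a)) = f (u.vert (r + δ * b)) := by
  let e (i : ℕ) : ℤ := if i ≤ a then ε * (a - i) else r + δ * (i - a - 1)
  have not_dvd (i j : ℕ) (hi : i ≤ a) (hj : a < j) (hjs : j ≤ s) : ¬ m ∣ e j - e i := fun hdvd ↦ by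
    obtain ⟨hpos, hlt⟩ := hdisj (a - i) (by lia) (j - a - 1) (by lia)
    rw [show e j - e i = r + δ * (j - a - 1 : ℕ) - ε * (a - i : ℕ) by grind] at hdvd
    exact hlt.not_ge (Int.le_of_dvd hpos hdvd)
  have eq_of_dvd (γ : ℤˣ) {x : ℤ} (hx : |x| < m) (hdvd : m ∣ γ * x) : x = 0 :=
    Int.eq_zero_of_abs_lt_dvd (γ.isUnit.dvd_mul_left.mp hdvd) hx
  have hinj (i : ℕ) (hi : i ≤ s) (j : ℕ) (hj : j ≤ s) (hij : e i ≡ e j [ZMOD m]) : i = j := by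
    by_cases hia : i ≤ a <;> by_cases hja : j ≤ a
    · have := eq_of_dvd ε (x := i - j) (by grind) (by convert hij.dvd using 1; grind)
      lia
    · exact absurd hij.dvd (not_dvd i j hia (by lia) hj)
    · exact absurd hij.symm.dvd (not_dvd j i hja (by lia) hi)
    · have := eq_of_dvd δ (x := j - i) (by grind) (by convert hij.dvd using 1; grind)
      lia
  have hadj (i : ℕ) : G.Adj (u.vert (e i)) (u.vert (e (i + 1))) := by
    obtain hia | rfl | hia := lt_trichotomy i a
    · convert (u.adj_vert_add_unit ε (e (i + 1))).symm using 2
      grind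
    · convert u.adj_chord using 2 <;> grind
    · convert u.adj_vert_add_unit δ (e i) using 2
      grind
  have e_zero : e 0 = ε * a := by simp [e]
  have e_last : e s = r + δ * b := by
    rw [← hab, show e (a + b + 1) = r + δ * ((a + b + 1 : ℕ) - a - 1) from if_neg (by lia)]
    push_cast
    ring
  rw [← e_zero, ← e_last]
  exact h.eq_of_injOn e hinj fun i _ ↦ hadj i

/- Here and below, the paths of length `s` through the chord are moved along the cycle. The equality
this gives between `f` at two moving points holds on a whole period, hence everywhere. -/
theorem PathInvariant.periodic_sub_one (h : u.PathInvariant f s) (hs0 : 0 < s) (hrs : r + s ≤ m) :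
    Periodic (f ∘ u.vert) (r - 1) := by
  have := u.two_le
  have hper := h.periodic (by lia)
  have heq : (fun x ↦ f (u.vert (x + (1 - s)))) = fun x ↦ f (u.vert (x + r)) := by
    refine eq_of_periodic_of_eqOn_Ico (by lia) (hper.add_const _) (hper.add_const _) (a := 0) ?_
    rintro x ⟨hx0, hxs⟩
    lift x to ℕ using hx0
    convert h.eq_across_chord (by lia) (-1) 1 (a := s - 1 - x) (b := x) (by lia)
      (by grind [Units.val_one, Units.val_neg]) using 3
    all_goals grind [Units.val_one, Units.val_neg]
  intro x
  calc f (u.vert (x + (r - 1))) = f (u.vert (x - s)) := by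
        convert (congrFun heq (x - 1)).symm using 3 <;> ring
    _ = f (u.vert x) := hper.sub_eq x

theorem PathInvariant.periodic_add_one (h : u.PathInvariant f s) (hs0 : 0 < s) (hsr : s ≤ r) :
    Periodic (f ∘ u.vert) (r + 1) := by
  have := u.add_two_le
  have hper := h.periodic (by lia)
  have heq : (fun x ↦ f (u.vert (x + 0))) = fun x ↦ f (u.vert (x + (r + 1 - s))) := by
    refine eq_of_periodic_of_eqOn_Ico (by lia) (hper.add_const _) (hper.add_const _) (a := 0) ?_
    rintro x ⟨hx0, hxs⟩
    lift x to ℕ using hx0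
    convert h.eq_across_chord (by lia) 1 (-1) (a := x) (b := s - 1 - x) (by lia)
      (by grind [Units.val_one, Units.val_neg]) using 3
    all_goals grind [Units.val_one, Units.val_neg]
  intro x
  calc f (u.vert (x + (r + 1))) = f (u.vert (x + (r + 1) - s)) := (hper.sub_eq _).symm
    _ = f (u.vert x) := by convert (congrFun heq x).symm using 3 <;> ring

theorem PathInvariant.reflect_add_one (h : u.PathInvariant f s) (hs : s < m) {p : ℤ} (hp : 0 < p)
    (hper : Periodic (f ∘ u.vert) p) (hps : p ≤ s) (hpms : p ≤ m - s) (hpr : p ≤ r)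
    (hpmr : p ≤ m - r) (x : ℤ) : f (u.vert (r + 1 - x)) = f (u.vert x) := by
  have heq : (fun x ↦ f (u.vert (0 - x))) = fun x ↦ f (u.vert (x + (r + 1 - s))) := by
    refine eq_of_periodic_of_eqOn_Ico hp (hper.const_sub 0) (hper.add_const _)
      (a := max 0 (s - r)) ?_
    rintro x ⟨hx, hxp⟩
    lift x to ℕ using by lia
    convert h.eq_across_chord hs (-1) (-1) (a := x) (b := s - 1 - x) (by lia)
      (by grind [Units.val_one, Units.val_neg]) using 3
    all_goals grind [Units.val_one, Units.val_neg]
  calc f (u.vert (r + 1 - x)) = f (u.vert (r + 1 - x - s)) := ((h.periodic hs).sub_eq _).symm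
    _ = f (u.vert x) := by convert (congrFun heq (-x)).symm using 3 <;> ring

theorem PathInvariant.reflect_sub_one (h : u.PathInvariant f s) (hs : s < m) {p : ℤ} (hp : 0 < p)
    (hper : Periodic (f ∘ u.vert) p) (hps : p ≤ s) (hpms : p ≤ m - s) (hpr : p ≤ r)
    (hpmr : p ≤ m - r) (x : ℤ) : f (u.vert (r - 1 - x)) = f (u.vert x) := by
  have heq : (fun x ↦ f (u.vert (x + 0))) = fun x ↦ f (u.vert (r + s - 1 - x)) := by
    refine eq_of_periodic_of_eqOn_Ico hp (hper.add_const 0) (hper.const_sub _)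
      (a := max 0 (s - (m - r))) ?_
    rintro x ⟨hx, hxp⟩
    lift x to ℕ using by lia
    convert h.eq_across_chord hs 1 1 (a := x) (b := s - 1 - x) (by lia)
      (by grind [Units.val_one, Units.val_neg]) using 3
    all_goals grind [Units.val_one, Units.val_neg]
  calc f (u.vert (r - 1 - x)) = f (u.vert (r - 1 - x + s)) := (h.periodic hs _).symm
    _ = f (u.vert x) := by convert (congrFun heq x).symm using 3 <;> ring

theorem PathInvariant.periodic_two (h : u.PathInvariant f s) (hs0 : 0 < s) (hs : s < m) :
    Periodic (f ∘ u.vert) 2 := by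
  have hr := u.two_le
  have hrm := u.add_two_le
  obtain ⟨p, hp, periodic_iff⟩ := exists_pos_forall_periodic_iff_dvd (f := f ∘ u.vert) (m := m)
    (by lia) (u.periodic_vert.comp f)
  have hper : Periodic (f ∘ u.vert) p := (periodic_iff p).mpr dvd_rfl
  have dvd_s : p ∣ s := (periodic_iff s).mp (h.periodic hs)
  have dvd_m : p ∣ m := (periodic_iff m).mp (u.periodic_vert.comp f)
  have le_s : p ≤ s := Int.le_of_dvd (by lia) dvd_s
  have le_m_sub_s : p ≤ m - s := Int.le_of_dvd (by lia) (dvd_m.sub dvd_s)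
  -- If the least period `p` were at least `r`, then `r - 1` would be a smaller one.
  have lt_r : p < r := by
    by_contra! hrp
    have dvd := (periodic_iff _).mp (h.periodic_sub_one hs0 (by lia))
    have := Int.le_of_dvd (by lia) dvd
    lia
  have lt_m_sub_r : p < m - r := by
    by_contra! hmrp
    have dvd := (periodic_iff _).mp (h.periodic_add_one hs0 (by lia))
    have := Int.le_of_dvd (by lia) (dvd_m.sub dvd)
    lia
  -- The two reflections compose to a translation by two.
  intro x
  calc f (u.vert (x + 2)) = f (u.vert (r + 1 - (x + 2))) :=
        (h.reflect_add_one hs hp hper le_s le_m_sub_s lt_r.le lt_m_sub_r.le _).symm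
    _ = f (u.vert (r - 1 - x)) := by ring_nf
    _ = f (u.vert x) := h.reflect_sub_one hs hp hper le_s le_m_sub_s lt_r.le lt_m_sub_r.le x

end ChordedCycle

section LongestPath

variable {V : Type*} {G : SimpleGraph V}

/-- The cycle formed by the first `M + 1` vertices of a path and a closing edge. -/
def ChordedCycle.ofIsPath {a b : V} {p : G.Walk a b} (hp : p.IsPath) {r M : ℕ}
    (hM : M ≤ p.length) (hr : 2 ≤ r) (hrM : r < M) (hadj_r : G.Adj a (p.getVert r))
    (hadj_M : G.Adj a (p.getVert M)) : ChordedCycle G (M + 1) r where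
  vert x := p.getVert (x % (M + 1)).toNat
  vert_eq_iff x y := by
    have lt (z : ℤ) : z % (M + 1) < M + 1 := Int.emod_lt_of_pos z (by lia)
    have nonneg (z : ℤ) : 0 ≤ z % (M + 1) := Int.emod_nonneg z (by lia)
    have mem (z : ℤ) : (z % (M + 1)).toNat ∈ {i | i ≤ p.length} := by
      have := lt z
      simp only [Set.mem_ofPred_eq]
      lia
    have := nonneg x
    have := nonneg y
    rw [hp.getVert_injOn.eq_iff (mem x) (mem y), Int.ModEq]
    lia
  adj_succ x := by
    have lt : x % (M + 1) < M + 1 := Int.emod_lt_of_pos x (by lia)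
    have nonneg : 0 ≤ x % (M + 1) := Int.emod_nonneg x (by lia)
    rw [← Int.emod_add_emod x]
    generalize x % (M + 1 : ℤ) = i at *
    lift i to ℕ using nonneg
    obtain hi | rfl : i < M ∨ i = M := by lia
    · rw [Int.emod_eq_of_lt (by lia) (by lia)]
      exact p.adj_getVert_succ (by lia)
    · simpa using hadj_M.symm
  adj_chord := by
    rw [Int.emod_eq_of_lt (a := (r : ℤ)) (by lia) (by lia)]
    simpa using hadj_r
  two_le := by lia
  add_two_le := by lia

theorem exists_isPath_forall_adj_mem_support [Finite G.edgeSet] (hG : G ≠ ⊥) :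
    ∃ a ∈ G.support, ∃ (b : V) (p : G.Walk a b), p.IsPath ∧ ∀ v, G.Adj a v → v ∈ p.support := by
  obtain ⟨x, y, hxy⟩ := ne_bot_iff_exists_adj.mp hG
  have : Nonempty V := ⟨x⟩
  obtain ⟨a, b, p, hp, hmax⟩ := Walk.exists_isPath_forall_isPath_length_le_length G
  have one_le : 1 ≤ p.length := hmax x y hxy.toWalk (by simp [hxy.ne])
  have ha : G.Adj a (p.getVert 1) := by simpa using p.adj_getVert_succ one_le
  refine ⟨a, ⟨_, ha⟩, b, p, hp, fun v hav ↦ ?_⟩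
  by_contra hv
  have := hmax v b (.cons hav.symm p) (hp.cons hv)
  simp at this

theorem two_mul_card_le_of_forall_odd {J : Finset ℕ} {M : ℕ} (hodd : ∀ i ∈ J, Odd i)
    (hle : ∀ i ∈ J, i ≤ M) : 2 * #J ≤ M + 1 := by
  have : #J ≤ #(range ((M + 1) / 2)) :=
    card_le_card_of_injOn (· / 2) (fun i _ ↦ by grind) fun i _ j _ _ ↦ by grind
  rw [card_range] at this
  lia

theorem exists_chordedCycle_of_le_degree [Finite G.edgeSet] [G.LocallyFinite] (c : G.Coloring Bool)
    (hG : G ≠ ⊥) {d : ℕ} (hd : 3 ≤ d) (hdeg : ∀ v ∈ G.support, d ≤ G.degree v) :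
    ∃ (m r : ℤ), 2 * d ≤ m ∧ Nonempty (ChordedCycle G m r) := by
  classical
  obtain ⟨a, ha, b, p, hp, hnbr⟩ := exists_isPath_forall_adj_mem_support hG
  let J : Finset ℕ := {i ∈ range (p.length + 1) | G.Adj a (p.getVert i)}
  have odd_of_mem {i : ℕ} (hi : i ∈ J) : Odd i := by
    obtain ⟨hi_lt, hadj⟩ := mem_filter.mp hi
    have length_take : (p.take i).length = i := by grind [Walk.take_length]
    rw [← Nat.not_even_iff_odd, ← length_take, c.even_length_iff_congr, ← Bool.eq_iff_iff]
    exact c.valid hadj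
  have le_card : d ≤ #J := by
    refine (hdeg a ha).trans (card_le_card_of_surjOn p.getVert fun v hv ↦ ?_)
    have hav : G.Adj a v := by simpa using hv
    obtain ⟨i, rfl, hi⟩ := Walk.mem_support_iff_exists_getVert.mp (hnbr v hav)
    exact ⟨i, by simpa [J, Nat.lt_succ_iff] using ⟨hi, hav⟩, rfl⟩
  have hJ : J.Nonempty := card_pos.mp (by lia)
  set M := J.max' hJ
  have hM : M ∈ J := J.max'_mem hJ
  have card_le : 2 * #J ≤ M + 1 :=
    two_mul_card_le_of_forall_odd (fun i ↦ odd_of_mem) (fun i ↦ J.le_max' i)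
  obtain ⟨r, hr, hr_ne⟩ : ∃ r ∈ J, r ∉ ({1, M} : Finset ℕ) :=
    exists_mem_notMem_of_card_lt_card (by grind [card_le_two])
  have : r ≤ M := J.le_max' r hr
  obtain ⟨-, hadj_r⟩ := mem_filter.mp hr
  obtain ⟨hM_lt, hadj_M⟩ := mem_filter.mp hM
  have := mem_range.mp hM_lt
  have := odd_of_mem hr
  exact ⟨M + 1, r, by lia,
    ⟨.ofIsPath hp (by lia) (by grind) (by grind) hadj_r hadj_M⟩⟩

end LongestPath

section DenseSubgraph

variable {V : Type*} [Fintype V]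

theorem two_mul_card_filter_apply_ne [DecidableEq V] {a b : V} (hab : a ≠ b) :
    2 * #{f : V → Bool | f a ≠ f b} = Fintype.card (V → Bool) := by
  let flip (f : V → Bool) : V → Bool := update f a (!f a)
  have flip_flip (f : V → Bool) : flip (flip f) = f := by
    funext v
    by_cases h : v = a <;> simp [flip, h]
  have card_eq : #{f : V → Bool | f a ≠ f b} = #{f : V → Bool | ¬f a ≠ f b} := by
    refine card_nbij' flip flip (fun f hf ↦ ?_) (fun f hf ↦ ?_) (fun f _ ↦ flip_flip f)
      fun f _ ↦ flip_flip f
    all_goals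
      simp only [coe_filter, mem_univ, true_and, Set.mem_ofPred_eq] at hf ⊢
      grind
  have := card_filter_add_card_filter_not (s := univ) (fun f : V → Bool ↦ f a ≠ f b)
  rw [card_univ] at this
  lia

theorem exists_coloring_le_card_edgeFinset (G : SimpleGraph V) [DecidableRel G.Adj] :
    ∃ H ≤ G, ∃ _ : DecidableRel H.Adj, Nonempty (H.Coloring Bool) ∧
      #G.edgeFinset ≤ 2 * #H.edgeFinset := by
  classical
  let cut (f : V → Bool) : SimpleGraph V := G ⊓ (⊤ : SimpleGraph Bool).comap f
  have card_cut (f : V → Bool) :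
      #(cut f).edgeFinset = #{e ∈ G.edgeFinset | e ∈ (cut f).edgeSet} := by
    congr 1
    ext e
    rw [mem_filter, mem_edgeFinset, mem_edgeFinset, iff_and_self]
    exact fun he ↦ edgeSet_mono inf_le_left he
  have card_edge (e : Sym2 V) (he : e ∈ G.edgeFinset) :
      2 * #{f : V → Bool | e ∈ (cut f).edgeSet} = Fintype.card (V → Bool) := by
    induction e with | h a b =>
    rw [mem_edgeFinset, mem_edgeSet] at he
    rw [← two_mul_card_filter_apply_ne he.ne]
    simp [cut, he]
  have sum_eq : ∑ _f : V → Bool, #G.edgeFinset = ∑ f, 2 * #(cut f).edgeFinset := by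
    calc ∑ _f : V → Bool, #G.edgeFinset = ∑ _e ∈ G.edgeFinset, Fintype.card (V → Bool) := by
          simp [mul_comm]
      _ = ∑ e ∈ G.edgeFinset, 2 * #{f : V → Bool | e ∈ (cut f).edgeSet} :=
          (sum_congr rfl card_edge).symm
      _ = ∑ f, 2 * #(cut f).edgeFinset := by
          simp_rw [card_cut, ← mul_sum]
          exact congrArg (2 * ·) (sum_card_bipartiteAbove_eq_sum_card_bipartiteBelow
            fun f e ↦ e ∈ (cut f).edgeSet).symm
  obtain ⟨f, -, hf⟩ := exists_le_of_sum_le univ_nonempty sum_eq.le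
  exact ⟨cut f, inf_le_left, inferInstance, ⟨⟨f, fun h ↦ h.2⟩⟩, hf.trans_eq (by congr!)⟩

theorem exists_le_forall_mem_support_lt_degree {D : ℕ} {T : Finset V} (G : SimpleGraph V)
    [DecidableRel G.Adj] (hT : G.support ⊆ T) (hD : D * #T < #G.edgeFinset) :
    ∃ H ≤ G, ∃ _ : DecidableRel H.Adj, H ≠ ⊥ ∧ ∀ v ∈ H.support, D < H.degree v := by
  classical
  induction T using Finset.strongInduction generalizing G with | H T ih =>
  by_cases! hdeg : ∀ v ∈ G.support, D < G.degree v
  · refine ⟨G, le_rfl, inferInstance, ?_, hdeg⟩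
    rw [← edgeFinset_nonempty, ← card_pos]
    lia
  · obtain ⟨v, hv, hvD⟩ := hdeg
    have hvT : v ∈ T := hT hv
    have support_subset : (G.deleteIncidenceSet v).support ⊆ T.erase v := by
      rw [coe_erase]
      exact (G.support_deleteIncidenceSet_subset v).trans (Set.sdiff_subset_sdiff_left hT)
    have card_lt : D * #(T.erase v) < #(G.deleteIncidenceSet v).edgeFinset := by
      have : D * #(T.erase v) + D = D * #T := by rw [← card_erase_add_one hvT, mul_add_one]
      rw [card_edgeFinset_deleteIncidenceSet]
      lia
    obtain ⟨H, hH, hdec, hbot, hHdeg⟩ := ih _ (erase_ssubset hvT) _ support_subset card_lt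
    exact ⟨H, hH.trans (G.deleteIncidenceSet_le v), hdec, hbot, hHdeg⟩

end DenseSubgraph

namespace ChordedCycle

variable {V : Type*} {G H : SimpleGraph V} {m r : ℤ}

/-- A chorded cycle of a subgraph, seen in the larger graph. -/
def mono (hGH : G ≤ H) (u : ChordedCycle G m r) : ChordedCycle H m r where
  __ := u
  adj_succ x := hGH (u.adj_succ x)
  adj_chord := hGH u.adj_chord

theorem exists_isPath_apply_ne {α : Type*} (u : ChordedCycle G m r) (c : G.Coloring Bool)
    (g : V → α) {y z : ℤ} (hc : c (u.vert y) = c (u.vert z)) (hg : g (u.vert y) ≠ g (u.vert z))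
    {s : ℕ} (hs_even : Even s) (hs0 : 0 < s) (hs : s < m) :
    ∃ (a b : V) (p : G.Walk a b), p.IsPath ∧ p.length = s ∧
      (∀ v ∈ p.support, v ∈ Set.range u.vert) ∧
      c a = c (u.vert y) ∧ c b = c (u.vert y) ∧ g a ≠ g b := by
  classical
  let f (v : V) : Option α := if c v = c (u.vert y) then some (g v) else none
  have f_of_eq {v : V} (hv : c v = c (u.vert y)) : f v = some (g v) := if_pos hv
  have f_of_ne {v : V} (hv : c v ≠ c (u.vert y)) : f v = none := if_neg hv
  have hf : ¬u.PathInvariant f s := fun h ↦ by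
    have hper := h.periodic_two hs0 hs
    obtain ⟨n, hn⟩ | ⟨n, hn⟩ := Int.even_or_odd (z - y)
    · obtain rfl : z = y + n * 2 := by lia
      have : f (u.vert (y + n * 2)) = f (u.vert y) := hper.int_mul n y
      rw [f_of_eq rfl, f_of_eq hc.symm, Option.some_inj] at this
      exact hg this.symm
    · obtain rfl : z = y + 1 + n * 2 := by lia
      have : f (u.vert (y + 1 + n * 2)) = f (u.vert (y + 1)) := hper.int_mul n (y + 1)
      rw [f_of_eq hc.symm, f_of_ne (c.valid (u.adj_succ y)).symm] at this
      exact Option.some_ne_none _ this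
  simp only [PathInvariant, not_forall] at hf
  obtain ⟨a, b, p, hp, hlen, hsupp, hne⟩ := hf
  have hab : c a = c b := by
    rwa [← hlen, c.even_length_iff_congr, ← Bool.eq_iff_iff] at hs_even
  have ha : c a = c (u.vert y) := by
    by_contra ha
    exact hne ((f_of_ne ha).trans (f_of_ne (hab ▸ ha)).symm)
  have hb : c b = c (u.vert y) := hab ▸ ha
  rw [f_of_eq ha, f_of_eq hb, Option.some_inj] at hne
  exact ⟨a, b, p, hp, hlen, hsupp, ha, hb, hne⟩

end ChordedCycle

section Layer

variable {V : Type*} {G : SimpleGraph V} {x : V}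

/-- The set of vertices at distance exactly `i` from `x`; vertices that cannot be reached from `x`
lie in no layer. -/
def layer (G : SimpleGraph V) (x : V) (i : ℕ) : Set V := {v | G.edist x v = i}

theorem layer_zero : layer G x 0 = {x} := by
  ext v
  simp [layer, eq_comm (a := v)]

theorem eq_of_mem_layer {i j : ℕ} {v : V} (hi : v ∈ layer G x i) (hj : v ∈ layer G x j) : i = j :=
  Nat.cast_injective (hi.symm.trans hj)

theorem isBipartiteWith_between_layer (i : ℕ) :
    (G.between (layer G x i) (layer G x (i + 1))).IsBipartiteWith
      (layer G x i) (layer G x (i + 1)) :=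
  between_isBipartiteWith <| Set.disjoint_left.mpr fun _ hi hj ↦
    i.lt_succ_self.ne (eq_of_mem_layer hi hj)

theorem edist_le_edist_add_one_of_adj {v w : V} (h : G.Adj v w) :
    G.edist x w ≤ G.edist x v + 1 :=
  G.edist_triangle.trans (by rw [edist_eq_one_iff_adj.mpr h])

theorem exists_mem_layer_adj {i : ℕ} {v : V} (hv : v ∈ layer G x (i + 1)) :
    ∃ w ∈ layer G x i, G.Adj v w := by
  obtain ⟨p, hp⟩ := exists_walk_of_edist_eq_coe hv
  have hadj : G.Adj p.penultimate v := p.adj_penultimate (by rw [← Walk.length_eq_zero_iff]; lia)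
  have hle : G.edist x p.penultimate ≤ i := by
    simpa [hp] using p.dropLast.edist_le
  refine ⟨p.penultimate, ?_, hadj.symm⟩
  have hge := (edist_le_edist_add_one_of_adj (x := x) hadj)
  rw [show G.edist x v = _ from hv] at hge
  lift G.edist x p.penultimate to ℕ using ne_top_of_le_ne_top (ENat.natCast_ne_top i) hle with n hn
  norm_cast at hge hle
  exact hn.symm.trans (by congr 1; lia)

/-- `parent` sends every vertex of layer `i + 1` around `x` to a neighbour in layer `i`, so that it
encodes a breadth-first search tree rooted at `x`. Its values elsewhere are irrelevant. -/
def IsParentMap (G : SimpleGraph V) (x : V) (parent : V → V) : Prop :=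
  ∀ v i, v ∈ layer G x (i + 1) → parent v ∈ layer G x i ∧ G.Adj v (parent v)

theorem exists_isParentMap (G : SimpleGraph V) (x : V) : ∃ parent, IsParentMap G x parent := by
  have exists_parent (v : V) :
      ∃ w, ∀ i, v ∈ layer G x (i + 1) → w ∈ layer G x i ∧ G.Adj v w := by
    by_cases! hv : ∃ i, v ∈ layer G x (i + 1)
    · obtain ⟨i, hi⟩ := hv
      obtain ⟨w, hw, hadj⟩ := exists_mem_layer_adj hi
      refine ⟨w, fun j hj ↦ ?_⟩
      obtain rfl : j = i := by simpa using eq_of_mem_layer hj hi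
      exact ⟨hw, hadj⟩
    · exact ⟨v, fun i hi ↦ absurd hi (hv i)⟩
  choose parent hparent using exists_parent
  exact ⟨parent, hparent⟩

variable {parent : V → V}

theorem IsParentMap.iterate_mem_layer (hparent : IsParentMap G x parent) {l j : ℕ} {v : V}
    (hv : v ∈ layer G x (j + l)) : parent^[l] v ∈ layer G x j := by
  induction l generalizing v with
  | zero => exact hv
  | succ l ih => exact ih (hparent v _ hv).1

theorem IsParentMap.exists_isPath (hparent : IsParentMap G x parent) {l j : ℕ} {a b : V}
    (ha : a ∈ layer G x (j + l)) (hb : b ∈ layer G x (j + l)) (heq : parent^[l] a = parent^[l] b)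
    (hne : ∀ i < l, parent^[i] a ≠ parent^[i] b) :
    ∃ p : G.Walk a b, p.IsPath ∧ p.length = 2 * l ∧
      ∀ v ∈ p.support, v = a ∨ v = b ∨ ∃ i < j + l, v ∈ layer G x i := by
  induction l generalizing a b with
  | zero =>
    obtain rfl : a = b := heq
    exact ⟨.nil, .nil, rfl, by simp⟩
  | succ l ih =>
    obtain ⟨ha', hadj_a⟩ := hparent a _ ha
    obtain ⟨hb', hadj_b⟩ := hparent b _ hb
    obtain ⟨p, hp, hlen, hsupp⟩ := ih ha' hb' heq fun i hi ↦ hne (i + 1) (by lia)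
    have below {v : V} (hv : v ∈ p.support) : ∃ i < j + (l + 1), v ∈ layer G x i := by
      obtain rfl | rfl | ⟨i, hi, hvi⟩ := hsupp v hv
      · exact ⟨j + l, by lia, ha'⟩
      · exact ⟨j + l, by lia, hb'⟩
      · exact ⟨i, by lia, hvi⟩
    have notMem {v : V} (hv : v ∈ layer G x (j + (l + 1))) : v ∉ p.support := fun hmem ↦ by
      obtain ⟨i, hi, hvi⟩ := below hmem
      exact hi.ne (eq_of_mem_layer hvi hv)
    have ne_ab : a ≠ b := hne 0 (by lia)
    refine ⟨.cons hadj_a (p.concat hadj_b.symm), (hp.concat (notMem hb) _).cons ?_, ?_, ?_⟩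
    · simp [Walk.support_concat, notMem ha, ne_ab]
    · simp only [Walk.length_cons, Walk.length_concat, hlen]
      lia
    · intro v hv
      simp only [Walk.support_cons, Walk.support_concat, List.mem_cons, List.mem_append] at hv
      grind

theorem IsParentMap.exists_merge_level (hparent : IsParentMap G x parent) {i : ℕ} {S : Set V}
    (hS : S ⊆ layer G x i) (hS_nontrivial : S.Nontrivial) :
    ∃ l < i, (∀ a ∈ S, ∀ b ∈ S, parent^[l + 1] a = parent^[l + 1] b) ∧
      ∃ a ∈ S, ∃ b ∈ S, parent^[l] a ≠ parent^[l] b := by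
  classical
  have iterate_eq_root {v : V} (hv : v ∈ S) : parent^[i] v = x := by
    have := hparent.iterate_mem_layer (l := i) (j := 0) (by simpa using hS hv)
    rwa [layer_zero] at this
  have merge : ∃ l, ∀ a ∈ S, ∀ b ∈ S, parent^[l] a = parent^[l] b :=
    ⟨i, fun a ha b hb ↦ (iterate_eq_root ha).trans (iterate_eq_root hb).symm⟩
  have find_le : Nat.find merge ≤ i :=
    Nat.find_min' merge fun a ha b hb ↦ (iterate_eq_root ha).trans (iterate_eq_root hb).symm
  obtain hl | ⟨l, hl⟩ : Nat.find merge = 0 ∨ ∃ l, Nat.find merge = l + 1 :=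
    (Nat.eq_zero_or_eq_succ_pred _).imp_right fun h ↦ ⟨_, h⟩
  · obtain ⟨a, ha, b, hb, hab⟩ := hS_nontrivial
    exact absurd ((Nat.find_eq_zero merge).mp hl a ha b hb) hab
  · refine ⟨l, by lia, hl ▸ Nat.find_spec merge, ?_⟩
    simpa using Nat.find_min merge (m := l) (by lia)

end Layer

section Cycle

variable {V : Type*} {G : SimpleGraph V}

theorem notMem_support_tail_of_isPath {a b : V} {p : G.Walk a b} (hp : p.IsPath) :
    a ∉ p.support.tail :=
  (List.nodup_cons.mp (p.cons_tail_support.symm ▸ hp.support_nodup)).1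

theorem exists_isCycle_of_isPath_of_isPath {a b : V} {p q : G.Walk a b} (hp : p.IsPath)
    (hq : q.IsPath) (hpq : ∀ v ∈ p.support, v ∈ q.support → v = a ∨ v = b) (hlen : 1 < p.length) :
    ∃ w : G.Walk a a, w.IsCycle ∧ w.length = p.length + q.length := by
  refine ⟨p.append q.reverse, hp.isCycle_append hq.reverse ?_ (.inl hlen), by simp⟩
  intro v hvp hvq
  obtain rfl | rfl := hpq v (List.mem_of_mem_tail hvp)
    (by simpa using List.mem_of_mem_tail hvq)
  · exact notMem_support_tail_of_isPath hp hvp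
  · exact notMem_support_tail_of_isPath hq.reverse hvq

theorem exists_coloring_of_isBipartiteWith {s t : Set V} (h : G.IsBipartiteWith s t) :
    ∃ c : G.Coloring Bool, ∀ v, c v ↔ v ∈ s := by
  classical
  refine ⟨Coloring.mk (fun v ↦ decide (v ∈ s)) fun {v w} hvw ↦ ?_, fun v ↦ decide_eq_true_iff⟩
  have := Set.disjoint_left.mp h.disjoint
  grind [h.mem_of_adj hvw]

theorem ChordedCycle.nontrivial_range_vert_inter {s t : Set V} {m r : ℤ} (u : ChordedCycle G m r)
    (h : G.IsBipartiteWith s t) : (Set.range u.vert ∩ s).Nontrivial := by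
  have disjoint := Set.disjoint_left.mp h.disjoint
  obtain ⟨y, hy⟩ : ∃ y, u.vert y ∈ s := by
    obtain ⟨hs, -⟩ | ⟨-, hs⟩ := h.mem_of_adj (u.adj_succ 0)
    exacts [⟨0, hs⟩, ⟨_, hs⟩]
  have hy_two : u.vert (y + 2) ∈ s := by
    have := h.mem_of_adj (u.adj_succ y)
    have := h.mem_of_adj (u.adj_succ (y + 1))
    grind
  refine ⟨_, ⟨⟨y, rfl⟩, hy⟩, _, ⟨⟨y + 2, rfl⟩, hy_two⟩, fun heq ↦ ?_⟩
  have hdvd : m ∣ y + 2 - y := ((u.vert_eq_iff _ _).mp heq).dvd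
  have := Int.le_of_dvd (by lia) hdvd
  have := u.two_le
  have := u.add_two_le
  lia

theorem ChordedCycle.exists_isCycle_of_between_layer {x : V} {i k : ℕ} {m r : ℤ} (hik : i < k)
    (hkm : 2 * k < m)
    (u : ChordedCycle (G.between (layer G x i) (layer G x (i + 1))) m r) :
    ∃ (v : V) (w : G.Walk v v), w.IsCycle ∧ w.length = 2 * k := by
  have hbip := isBipartiteWith_between_layer (G := G) (x := x) i
  obtain ⟨c, hc⟩ := exists_coloring_of_isBipartiteWith hbip
  obtain ⟨parent, hparent⟩ := exists_isParentMap G x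
  obtain ⟨l, hli, hmerge, _, ⟨⟨y, rfl⟩, hy⟩, _, ⟨⟨z, rfl⟩, hz⟩, hne⟩ :=
    hparent.exists_merge_level (i := i) Set.inter_subset_right (u.nontrivial_range_vert_inter hbip)
  obtain ⟨a, b, p, hp, hp_len, hp_supp, hca, hcb, hab⟩ :=
    u.exists_isPath_apply_ne c parent^[l] (by rw [Bool.eq_iff_iff, hc, hc]; exact iff_of_true hy hz)
      hne (s := 2 * (k - (l + 1))) (even_two_mul _) (by lia) (by lia)
  have ha : a ∈ layer G x i := by rwa [← hc, hca, hc]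
  have hb : b ∈ layer G x i := by rwa [← hc, hcb, hc]
  have iterate_ne (j : ℕ) (hj : j < l + 1) : parent^[j] a ≠ parent^[j] b := fun heq ↦ by
    obtain ⟨d, rfl⟩ := Nat.exists_eq_add_of_le' (Nat.le_of_lt_succ hj)
    exact hab (by rw [iterate_add_apply, heq, iterate_add_apply])
  obtain ⟨j, rfl⟩ := Nat.exists_eq_add_of_le' hli
  obtain ⟨q, hq, hq_len, hq_supp⟩ := hparent.exists_isPath ha hb
    (hmerge a ⟨hp_supp a p.start_mem_support, ha⟩ b ⟨hp_supp b p.end_mem_support, hb⟩) iterate_ne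
  have meet_only_at_ends (v : V) (hvp : v ∈ (p.mapLe between_le).support) (hvq : v ∈ q.support) :
      v = a ∨ v = b := by
    rw [Walk.support_mapLe_eq_support] at hvp
    obtain ⟨t, rfl⟩ := hp_supp v hvp
    refine (or_assoc.mpr (hq_supp _ hvq)).resolve_right fun ⟨d, hd, hvd⟩ ↦ ?_
    obtain ⟨hvi, -⟩ | ⟨hvi, -⟩ := hbip.mem_of_adj (u.adj_succ t) <;>
      · have := eq_of_mem_layer hvd hvi
        lia
  obtain ⟨w, hw, hw_len⟩ := exists_isCycle_of_isPath_of_isPath (p := p.mapLe between_le)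
    (hp.mapLe between_le) hq meet_only_at_ends (by rw [Walk.length_map, hp_len]; lia)
  exact ⟨a, w, hw, by rw [hw_len, hq_len, Walk.length_map, hp_len]; lia⟩

end Cycle

section Expansion

theorem pos_and_mul_lt_succ_of_mul_le_add {a : ℕ → ℝ} {N : ℝ} {k : ℕ} (hN : 1 ≤ N) (ha : 0 < a 0)
    (h0 : 4 * N * a 0 ≤ a 0 + a 1)
    (hsucc : ∀ i, i + 1 < k → 4 * N * a (i + 1) ≤ (a i + a (i + 1)) + (a (i + 1) + a (i + 2)))
    {i : ℕ} (hi : i < k) : 0 < a i ∧ N * a i < a (i + 1) := by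
  induction i with
  | zero => exact ⟨ha, by nlinarith⟩
  | succ i ih =>
    obtain ⟨hpos, hlt⟩ := ih (by lia)
    have hle : a i ≤ N * a i := le_mul_of_one_le_left hpos.le hN
    have hpos' : 0 < a (i + 1) := hpos.trans_le (hle.trans hlt.le)
    have hle' : a (i + 1) ≤ N * a (i + 1) := le_mul_of_one_le_left hpos'.le hN
    exact ⟨hpos', by linarith [hsucc i hi]⟩

theorem pow_mul_lt_of_forall_mul_lt {a : ℕ → ℝ} {N : ℝ} {k : ℕ} (hN : 0 < N) (hk : k ≠ 0)
    (h : ∀ i < k, N * a i < a (i + 1)) : N ^ k * a 0 < a k := by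
  induction k, Nat.one_le_iff_ne_zero.mpr hk using Nat.le_induction with
  | base => simpa using h 0 one_pos
  | succ k hk ih =>
    calc N ^ (k + 1) * a 0 = N * (N ^ k * a 0) := by ring
      _ < N * a k := mul_lt_mul_of_pos_left (ih (by lia) fun i hi ↦ h i (by lia)) hN
      _ < a (k + 1) := h k (by lia)

theorem mul_card_le_of_forall_mul_le {ι : Type*} {S : Finset ι} {f : ι → ℕ} {d B : ℝ} {k : ℕ}
    (hk : 0 < k) (hf : ∀ j ∈ S, k * d ≤ f j) (hS : ∑ j ∈ S, f j ≤ k * B) : d * #S ≤ B := by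
  refine le_of_mul_le_mul_left ?_ (Nat.cast_pos'.mpr hk)
  calc k * (d * #S) = #S • (k * d) := by rw [nsmul_eq_mul]; ring
    _ ≤ ∑ j ∈ S, (f j : ℝ) := card_nsmul_le_sum _ _ _ hf
    _ = (∑ j ∈ S, f j : ℕ) := (Nat.cast_sum _ _).symm
    _ ≤ k * B := mod_cast hS

variable {V : Type*} {G : SimpleGraph V} {x : V}

theorem mem_layer_of_adj (c : G.Coloring Bool) {i : ℕ} {v w : V} (hv : v ∈ layer G x i)
    (hvw : G.Adj v w) : w ∈ layer G x (i + 1) ∨ ∃ j, i = j + 1 ∧ w ∈ layer G x j := by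
  obtain ⟨p, hp⟩ := exists_walk_of_edist_eq_coe hv
  obtain ⟨j, hj⟩ : ∃ j : ℕ, G.edist x w = j :=
    (ENat.ne_top_iff_exists.mp
      (edist_ne_top_iff_reachable.mpr (p.concat hvw).reachable)).imp fun _ ↦ Eq.symm
  obtain ⟨q, hq⟩ := exists_walk_of_edist_eq_coe hj
  have hji := edist_le_edist_add_one_of_adj (x := x) hvw
  have hij := edist_le_edist_add_one_of_adj (x := x) hvw.symm
  rw [hj, show G.edist x v = i from hv] at hji hij
  norm_cast at hji hij
  have hne : j ≠ i := by
    rintro rfl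
    have hp_even := c.even_length_iff_congr p
    have hq_even := c.even_length_iff_congr q
    have := c.valid hvw
    grind
  obtain rfl | hlt := eq_or_ne j (i + 1)
  exacts [.inl hj, .inr ⟨j, by lia, hj⟩]

theorem layer_subset_support (hx : x ∈ G.support) (i : ℕ) : layer G x i ⊆ G.support := by
  intro v hv
  cases i with
  | zero => rwa [layer_zero.subset hv]
  | succ i =>
    obtain ⟨w, -, hvw⟩ := exists_mem_layer_adj hv
    exact ⟨w, hvw⟩

variable [Fintype V]

open scoped Classical in
theorem card_edgeFinset_between_layer_le {i k : ℕ} (hk : 2 ≤ k) (hik : i < k)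
    (h : ¬∃ (v : V) (w : G.Walk v v), w.IsCycle ∧ w.length = 2 * k) :
    #(G.between (layer G x i) (layer G x (i + 1))).edgeFinset ≤
      k * (#(layer G x i).toFinset + #(layer G x (i + 1)).toFinset) := by
  by_contra! hlt
  have hbip := isBipartiteWith_between_layer (G := G) (x := x) i
  have hsupp : (G.between (layer G x i) (layer G x (i + 1))).support ⊆
      ((layer G x i).toFinset ∪ (layer G x (i + 1)).toFinset : Finset V) := by
    simpa using isBipartiteWith_support_subset hbip
  obtain ⟨H, hH, _, hne, hdeg⟩ := exists_le_forall_mem_support_lt_degree (D := k) _ hsupp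
    (hlt.trans_le' (Nat.mul_le_mul_left k (card_union_le _ _)))
  obtain ⟨c, -⟩ := exists_coloring_of_isBipartiteWith hbip
  obtain ⟨m, r, hm, ⟨u⟩⟩ := exists_chordedCycle_of_le_degree (c.comp (Hom.ofLE hH)) hne
    (d := k + 1) (by lia) hdeg
  exact h ((u.mono hH).exists_isCycle_of_between_layer hik (by lia))

open scoped Classical in
theorem sum_degree_layer_zero_le [G.LocallyFinite] (c : G.Coloring Bool) :
    ∑ v ∈ (layer G x 0).toFinset, G.degree v ≤
      #(G.between (layer G x 0) (layer G x 1)).edgeFinset := by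
  have hbip : (G.between (layer G x 0) (layer G x 1)).IsBipartiteWith
      (layer G x 0).toFinset (layer G x 1).toFinset := by
    simpa using isBipartiteWith_between_layer 0
  rw [← isBipartiteWith_sum_degrees_eq_card_edges hbip]
  refine sum_le_sum fun v hv ↦ card_le_card fun w hw ↦ ?_
  rw [Set.mem_toFinset] at hv
  rw [mem_neighborFinset] at hw ⊢
  obtain hw' | ⟨j, hj, -⟩ := mem_layer_of_adj c hv hw
  exacts [⟨hw, .inl ⟨hv, hw'⟩⟩, absurd hj (by lia)]

open scoped Classical in
theorem sum_degree_layer_succ_le [G.LocallyFinite] (c : G.Coloring Bool) (i : ℕ) :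
    ∑ v ∈ (layer G x (i + 1)).toFinset, G.degree v ≤
      #(G.between (layer G x i) (layer G x (i + 1))).edgeFinset +
        #(G.between (layer G x (i + 1)) (layer G x (i + 2))).edgeFinset := by
  have hbip (j : ℕ) : (G.between (layer G x j) (layer G x (j + 1))).IsBipartiteWith
      (layer G x j).toFinset (layer G x (j + 1)).toFinset := by
    simpa using isBipartiteWith_between_layer j
  rw [← isBipartiteWith_sum_degrees_eq_card_edges' (hbip i),
    ← isBipartiteWith_sum_degrees_eq_card_edges (hbip (i + 1)), ← sum_add_distrib]
  refine sum_le_sum fun v hv ↦ (card_le_card fun w hw ↦ ?_).trans (card_union_le _ _)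
  rw [Set.mem_toFinset] at hv
  rw [mem_neighborFinset] at hw
  rw [mem_union, mem_neighborFinset, mem_neighborFinset]
  obtain hw' | ⟨j, hj, hw'⟩ := mem_layer_of_adj c hv hw
  · exact .inr ⟨hw, .inl ⟨hv, hw'⟩⟩
  · obtain rfl : i = j := by lia
    exact .inl ⟨hw, .inr ⟨hv, hw'⟩⟩

open scoped Classical in
theorem mul_card_layer_zero_le {k : ℕ} {d : ℝ} [G.LocallyFinite] (hk : 2 ≤ k)
    (h : ¬∃ (v : V) (w : G.Walk v v), w.IsCycle ∧ w.length = 2 * k) (c : G.Coloring Bool)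
    (hdeg : ∀ v ∈ layer G x 0, k * d ≤ G.degree v) :
    d * #(layer G x 0).toFinset ≤ #(layer G x 0).toFinset + #(layer G x 1).toFinset := by
  refine mul_card_le_of_forall_mul_le (k := k) (by lia) (by simpa using hdeg) ?_
  exact_mod_cast (sum_degree_layer_zero_le c).trans
    (card_edgeFinset_between_layer_le hk (by lia) h)

open scoped Classical in
theorem mul_card_layer_succ_le {i k : ℕ} {d : ℝ} [G.LocallyFinite] (hk : 2 ≤ k)
    (h : ¬∃ (v : V) (w : G.Walk v v), w.IsCycle ∧ w.length = 2 * k) (c : G.Coloring Bool)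
    (hi : i + 1 < k) (hdeg : ∀ v ∈ layer G x (i + 1), k * d ≤ G.degree v) :
    d * #(layer G x (i + 1)).toFinset ≤
      (#(layer G x i).toFinset + #(layer G x (i + 1)).toFinset) +
        (#(layer G x (i + 1)).toFinset + #(layer G x (i + 2)).toFinset) := by
  refine mul_card_le_of_forall_mul_le (k := k) (by lia) (by simpa using hdeg) ?_
  rw [mul_add]
  exact_mod_cast (sum_degree_layer_succ_le c i).trans (add_le_add
    (card_edgeFinset_between_layer_le hk (by lia) h) (card_edgeFinset_between_layer_le hk hi h))

theorem exists_isCycle_of_mul_le_degree {N : ℝ} {k : ℕ} (hk : 2 ≤ k) (hN : 1 ≤ N)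
    (hcard : Fintype.card V ≤ N ^ k) [G.LocallyFinite] (c : G.Coloring Bool) (hG : G ≠ ⊥)
    (hdeg : ∀ v ∈ G.support, k * (4 * N) ≤ G.degree v) :
    ∃ (v : V) (w : G.Walk v v), w.IsCycle ∧ w.length = 2 * k := by
  classical
  by_contra h
  obtain ⟨x, y, hxy⟩ := ne_bot_iff_exists_adj.mp hG
  have hdeg_layer (i : ℕ) : ∀ v ∈ layer G x i, k * (4 * N) ≤ G.degree v := fun v hv ↦
    hdeg v (layer_subset_support ⟨y, hxy⟩ i hv)
  let a (i : ℕ) : ℝ := #(layer G x i).toFinset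
  have a_zero : a 0 = 1 := by
    simp only [a, layer_zero, Set.toFinset_singleton, card_singleton, Nat.cast_one]
  have a_zero_le : 4 * N * a 0 ≤ a 0 + a 1 := mul_card_layer_zero_le hk h c (hdeg_layer 0)
  have a_succ_le (i : ℕ) (hi : i + 1 < k) :
      4 * N * a (i + 1) ≤ (a i + a (i + 1)) + (a (i + 1) + a (i + 2)) :=
    mul_card_layer_succ_le hk h c hi (hdeg_layer (i + 1))
  have pow_lt : N ^ k * a 0 < a k :=
    pow_mul_lt_of_forall_mul_lt (by positivity) (by lia) fun i hi ↦
      (pos_and_mul_lt_succ_of_mul_le_add hN (a_zero ▸ one_pos) a_zero_le a_succ_le hi).2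
  have a_le : a k ≤ Fintype.card V := Nat.cast_le.mpr (card_le_univ _)
  rw [a_zero, mul_one] at pow_lt
  exact (pow_lt.trans_le a_le).not_ge hcard

end Expansion

/-- Bondy–Simonovits: for `k ≥ 2`, every graph on `n` vertices with no cycle of length
exactly `2k` has at most `8k·n^{1+1/k}` edges. -/
theorem even_cycle_turan {V : Type*} [Fintype V] (G : SimpleGraph V)
    [DecidableRel G.Adj] (k : ℕ) (hk : 2 ≤ k)
    (h : ¬∃ (v : V) (w : G.Walk v v), w.IsCycle ∧ w.length = 2 * k) :
    (G.edgeFinset.card : ℝ) ≤ 8 * k * (Fintype.card V : ℝ) ^ (1 + 1 / (k : ℝ)) := by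
  by_contra! hlt
  have edges_pos : 0 < #G.edgeFinset :=
    Nat.cast_pos.mp ((show (0 : ℝ) ≤ _ by positivity).trans_lt hlt)
  obtain ⟨x, -⟩ := ne_bot_iff_exists_adj.mp (edgeFinset_nonempty.mp (card_pos.mp edges_pos))
  have one_le_card : 1 ≤ (Fintype.card V : ℝ) := mod_cast Fintype.card_pos_iff.mpr ⟨x⟩
  set N : ℝ := (Fintype.card V : ℝ) ^ (1 / k : ℝ) with hN
  have N_pow : N ^ k = Fintype.card V := by
    rw [hN, one_div, Real.rpow_inv_natCast_pow (by positivity) (by lia)]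
  have one_le_N : 1 ≤ N := Real.one_le_rpow one_le_card (by positivity)
  obtain ⟨B, hBG, _, ⟨c⟩, hB⟩ := exists_coloring_le_card_edgeFinset G
  have lt_edges : ⌊k * (4 * N)⌋₊ * #(univ : Finset V) < #B.edgeFinset := by
    rw [Real.rpow_add (by positivity), Real.rpow_one, ← hN] at hlt
    have floor_le := Nat.floor_le (show 0 ≤ k * (4 * N) by positivity)
    rify at hB ⊢
    rw [card_univ]
    nlinarith
  obtain ⟨H, hHB, _, hH, hdeg⟩ := exists_le_forall_mem_support_lt_degree B (by simp) lt_edges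
  obtain ⟨v, w, hw, hw_length⟩ := exists_isCycle_of_mul_le_degree hk one_le_N N_pow.ge
    (c.comp (Hom.ofLE hHB)) hH fun v hv ↦ (Nat.lt_of_floor_lt (hdeg v hv)).le
  exact h ⟨v, w.mapLe (hHB.trans hBG), hw.mapLe _, by rw [Walk.length_map, hw_length]⟩
end
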